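/- arXiv:2507.10037 — 3 statements merged into one kernel-verified Lean document; each statement's English description precedes it below -/
import Mathlib

section
/- For any ε > 0 there exists n₀(ε) such that the following holds for all n ≥ n₀(ε): if G is a graph on n vertices that is ε-far from every disjoint union of cliques (including the empty graph), then the least adjacency eigenvalue of G satisfies λ_n ≤ −n^(1/4 − ε). -/
-- The adjacency matrix of a simple graph, over `ℝ`.
open scoped Classical in
noncomputable def adjMat {V : Type*} (G : SimpleGraph V) : Matrix V V ℝ :=
  Matrix.of fun i j => if G.Adj i j then (1 : ℝ) else 0

/-- A graph is a disjoint union of cliques iff every connected component is complete. -/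
def IsUnionOfCliques {V : Type*} (G : SimpleGraph V) : Prop :=
  ∀ u v : V, G.Reachable u v → u ≠ v → G.Adj u v

/-- Two graphs on `n` vertices are `ε`-close if one can add or delete at most `ε n ^ 2`
edges of `G` to obtain a graph isomorphic to `H`. -/
def EpsClose {n : ℕ} (ε : ℝ) (G H : SimpleGraph (Fin n)) : Prop :=
  ∃ G' : SimpleGraph (Fin n), Nonempty (G' ≃g H) ∧
    ((symmDiff G.edgeSet G'.edgeSet).ncard : ℝ) ≤ ε * (n : ℝ) ^ 2

/-- `G` is `ε`-far from every disjoint union of cliques. -/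
def FarFromCliqueUnions {n : ℕ} (ε : ℝ) (G : SimpleGraph (Fin n)) : Prop :=
  ∀ H : SimpleGraph (Fin n), IsUnionOfCliques H → ¬ EpsClose ε G H

/-!
If every eigenvalue exceeds `-l` with `l = n ^ (α / 2)` and `α < 1 / 2`, then `M = A + l • 1` is
positive semidefinite and its Schur square satisfies `M ⊙ M ≤ M + l ^ 2 • 1`. Keeping the `f`
largest eigenvalues of `M` gives a matrix whose Schur square has rank at most `f ^ 2`, so
Cauchy–Schwarz on its diagonal and Ky Fan's principle bound the sum `s f` of these eigenvalues by
`s f ^ 2 ≤ n * (s (f ^ 2) + n ^ α * f ^ 2)`. Descending from `f ≈ √n` yields `s f ≤ 2 * n * f ^ α`.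
The eigenvalues therefore have square-summable tails, and `M` is close in `ℓ²` to the Gram matrix of
vectors `y u` in a space of bounded dimension.

Since a sum of `k` of these vectors has squared norm at most `k ^ 2 + l * k`, a small ball holding
many of them contains only vectors of norm about `1`; as boundedly many small balls cover a large
ball, all but few `y u` are that short. An induced path `u, v, w` would then need inner products
about `1`, `1` and `0` among three vectors of norm about `1`, which is impossible, so `G` has few
induced paths on three vertices. Clustering greedily around pivots of large degree that lie on few
such paths makes `G` a disjoint union of cliques at the cost of few edges.
-/

section Spectral

open Finset Matrix
open scoped MatrixOrder

variable {ι κ α β : Type*} [Fintype ι]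

lemma rank_hadamard_mul_le [Fintype κ] [Fintype β] (P : Matrix α ι ℝ)
    (Q : Matrix ι β ℝ) (R : Matrix α κ ℝ) (S : Matrix κ β ℝ) :
    ((P * Q) ⊙ (R * S)).rank ≤ Fintype.card ι * Fintype.card κ := by
  let L : Matrix α (ι × κ) ℝ := of fun a p => P a p.1 * R a p.2
  let T : Matrix (ι × κ) β ℝ := of fun p b => Q p.1 b * S p.2 b
  have hfactor : (P * Q) ⊙ (R * S) = L * T := by
    ext a b
    simp only [hadamard_apply, mul_apply, sum_mul_sum, Fintype.sum_prod_type, L, T, of_apply]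
    exact sum_congr rfl fun i _ => sum_congr rfl fun j _ => by ring
  rw [hfactor, ← Fintype.card_prod]
  exact (rank_mul_le_left L T).trans (rank_le_card_width L)

lemma hadamard_self_le_hadamard_self [Finite α] {A B : Matrix α α ℝ} (hA : 0 ≤ A) (hAB : A ≤ B) :
    A ⊙ A ≤ B ⊙ B := by
  have hdecomp : B ⊙ B - A ⊙ A = (B - A) ⊙ B + A ⊙ (B - A) := by
    ext u w
    simp only [Matrix.sub_apply, Matrix.add_apply, hadamard_apply]
    ring
  rw [Matrix.le_iff, hdecomp]
  rw [nonneg_iff_posSemidef] at hA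
  exact (hAB.hadamard (nonneg_iff_posSemidef.mp (hA.nonneg.trans hAB))).add (hA.hadamard hAB)

lemma sq_trace_le_card_mul_trace_hadamard_self [Fintype α] (A : Matrix α α ℝ) :
    A.trace ^ 2 ≤ Fintype.card α * (A ⊙ A).trace := by
  simpa only [trace, diag_apply, hadamard_apply, ← sq, card_univ] using
    sq_sum_le_card_mul_sum_sq (s := univ) (f := fun u => A u u)

lemma sq_norm_sum_le_of_gram_le [Finite α] {E : Type*} [NormedAddCommGroup E]
    [InnerProductSpace ℝ E] {y : α → E} {M : Matrix α α ℝ} (h : gram ℝ y ≤ M) (S : Finset α) :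
    ‖∑ u ∈ S, y u‖ ^ 2 ≤ ∑ u ∈ S, ∑ w ∈ S, M u w := by
  classical
  have := Fintype.ofFinite α
  let x : α → ℝ := fun u => if u ∈ S then 1 else 0
  have hquad (N : Matrix α α ℝ) : x ⬝ᵥ N *ᵥ x = ∑ u ∈ S, ∑ w ∈ S, N u w := by
    simp [x, dotProduct, mulVec]
  have hgram : ‖∑ u ∈ S, y u‖ ^ 2 = x ⬝ᵥ gram ℝ y *ᵥ x := by
    simp only [hquad, gram_apply, ← real_inner_self_eq_norm_sq, sum_inner, inner_sum]
    exact sum_comm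
  have hnonneg := (Matrix.le_iff.mp h).dotProduct_mulVec_nonneg x
  rwa [star_trivial, sub_mulVec, dotProduct_sub, ← hgram, hquad, sub_nonneg] at hnonneg

variable [DecidableEq ι]

/-- The symmetric matrix `Vᵀ diag(m) V`. When the rows of `V` are orthonormal, they are eigenvectors
for the eigenvalues `m`; dropping eigenvalues amounts to replacing them by `0`. -/
def spectralMatrix (V : Matrix ι α ℝ) (m : ι → ℝ) : Matrix α α ℝ :=
  Vᵀ * diagonal m * V

lemma spectralMatrix_apply (V : Matrix ι α ℝ) (m : ι → ℝ) (u w : α) :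
    spectralMatrix V m u w = ∑ i, m i * (V i u * V i w) := by
  rw [spectralMatrix, mul_apply]
  refine sum_congr rfl fun i _ => ?_
  rw [mul_diagonal, transpose_apply]
  ring

lemma spectralMatrix_add (V : Matrix ι α ℝ) (m t : ι → ℝ) :
    spectralMatrix V (m + t) = spectralMatrix V m + spectralMatrix V t := by
  simp only [spectralMatrix, ← Matrix.mul_add, ← Matrix.add_mul, diagonal_add]
  rfl

lemma spectralMatrix_sub (V : Matrix ι α ℝ) (m t : ι → ℝ) :
    spectralMatrix V (m - t) = spectralMatrix V m - spectralMatrix V t := by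
  rw [eq_sub_iff_add_eq, ← spectralMatrix_add, sub_add_cancel]

lemma spectralMatrix_const [DecidableEq α] {V : Matrix ι α ℝ} (hV : Vᵀ * V = 1) (c : ℝ) :
    spectralMatrix V (fun _ => c) = c • 1 := by
  rw [spectralMatrix, ← smul_one_eq_diagonal, Matrix.mul_smul, Matrix.smul_mul, Matrix.mul_one, hV]

lemma eq_spectralMatrix_of_mulVec_eq [Fintype α] [DecidableEq α] {A : Matrix α α ℝ}
    {V : Matrix ι α ℝ} (hV : Vᵀ * V = 1) {m : ι → ℝ} (h : ∀ i, A *ᵥ V i = m i • V i) :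
    A = spectralMatrix V m := by
  have hAV : A * Vᵀ = Vᵀ * diagonal m := by
    ext u i
    rw [mul_diagonal]
    exact (congrFun (h i) u).trans (mul_comm _ _)
  rw [spectralMatrix, ← hAV, Matrix.mul_assoc, hV, Matrix.mul_one]

lemma posSemidef_spectralMatrix [Finite α] (V : Matrix ι α ℝ) {m : ι → ℝ} (hm : 0 ≤ m) :
    (spectralMatrix V m).PosSemidef :=
  (PosSemidef.diagonal hm).conjTranspose_mul_mul_same V

lemma spectralMatrix_le_spectralMatrix [Finite α] (V : Matrix ι α ℝ) {m t : ι → ℝ} (h : m ≤ t) :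
    spectralMatrix V m ≤ spectralMatrix V t := by
  rw [Matrix.le_iff, ← spectralMatrix_sub]
  exact posSemidef_spectralMatrix V (sub_nonneg.mpr h)

lemma trace_spectralMatrix [Fintype α] {V : Matrix ι α ℝ} (hV : V * Vᵀ = 1) (m : ι → ℝ) :
    (spectralMatrix V m).trace = ∑ i, m i := by
  rw [spectralMatrix, trace_mul_comm, ← Matrix.mul_assoc, hV, Matrix.one_mul, trace_diagonal]

lemma transpose_spectralMatrix (V : Matrix ι α ℝ) (m : ι → ℝ) :
    (spectralMatrix V m)ᵀ = spectralMatrix V m := by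
  simp only [spectralMatrix, transpose_mul, transpose_transpose, diagonal_transpose,
    Matrix.mul_assoc]

lemma sum_sq_spectralMatrix [Fintype α] {V : Matrix ι α ℝ} (hV : V * Vᵀ = 1) (m : ι → ℝ) :
    ∑ u, ∑ w, spectralMatrix V m u w ^ 2 = ∑ i, m i ^ 2 := by
  have hmul : spectralMatrix V m * spectralMatrix V m = spectralMatrix V (m * m) := by
    calc _ = Vᵀ * diagonal m * (V * Vᵀ) * diagonal m * V := by
          simp only [spectralMatrix, Matrix.mul_assoc]
      _ = spectralMatrix V (m * m) := by
          rw [hV, Matrix.mul_one, Matrix.mul_assoc Vᵀ, diagonal_mul_diagonal']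
          rfl
  calc _ = ∑ u, ∑ w, (spectralMatrix V m ⊙ spectralMatrix V m) u w := by
        simp only [hadamard_apply, sq]
    _ = ∑ i, m i ^ 2 := by
        rw [sum_hadamard_eq, transpose_spectralMatrix, hmul, trace_spectralMatrix hV]
        simp only [Pi.mul_apply, sq]

lemma spectralMatrix_submatrix_of_injective [Fintype κ] [DecidableEq κ] {e : κ → ι}
    (he : e.Injective) (V : Matrix ι α ℝ) {m : ι → ℝ} (hm : ∀ i ∉ Set.range e, m i = 0) :
    spectralMatrix (V.submatrix e id) (m ∘ e) = spectralMatrix V m := by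
  ext u w
  simp only [spectralMatrix_apply]
  exact Fintype.sum_of_injective e he _ _ (fun i hi => by rw [hm i hi, zero_mul]) fun _ => rfl

lemma exists_gram_eq_spectralMatrix (V : Matrix ι α ℝ) {m : ι → ℝ} (hm : 0 ≤ m) :
    ∃ y : α → EuclideanSpace ℝ ι, gram ℝ y = spectralMatrix V m := by
  refine ⟨fun u => WithLp.toLp 2 fun i => √(m i) * V i u, ?_⟩
  ext u w
  rw [gram_apply, PiLp.inner_apply, spectralMatrix_apply]
  refine sum_congr rfl fun i _ => ?_
  simp only [RCLike.inner_apply, conj_trivial]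
  linear_combination V i u * V i w * Real.mul_self_sqrt (hm i)

lemma rank_spectralMatrix_hadamard_self_le [Fintype α] (V : Matrix ι α ℝ) (m : ι → ℝ) :
    (spectralMatrix V m ⊙ spectralMatrix V m).rank ≤ Fintype.card ι ^ 2 := by
  rw [sq]
  exact rank_hadamard_mul_le _ _ _ _

end Spectral

section Truncation

open Finset Matrix
open scoped MatrixOrder

variable {n : ℕ}

/-- The sequence `m` with all but its first `f` entries replaced by `0`. -/
def truncate (m : Fin n → ℝ) (f : ℕ) : Fin n → ℝ :=
  fun i => if i.val < f then m i else 0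

/-- The sum of the first `f` entries of `m`: the Ky Fan norm when `m` lists the eigenvalues of a
positive semidefinite matrix in decreasing order. -/
def topSum (m : Fin n → ℝ) (f : ℕ) : ℝ :=
  ∑ i, truncate m f i

variable {m : Fin n → ℝ}

lemma truncate_of_lt {i : Fin n} {f : ℕ} (h : i.val < f) : truncate m f i = m i :=
  if_pos h

lemma truncate_of_le {i : Fin n} {f : ℕ} (h : f ≤ i.val) : truncate m f i = 0 :=
  if_neg h.not_gt

lemma truncate_nonneg (hm : 0 ≤ m) (f : ℕ) : 0 ≤ truncate m f := by
  intro i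
  unfold truncate
  split_ifs
  exacts [hm i, le_rfl]

lemma truncate_mono (hm : 0 ≤ m) : Monotone (truncate m) := by
  intro f g hfg i
  rcases lt_or_ge i.val f with hi | hi
  · rw [truncate_of_lt hi, truncate_of_lt (hi.trans_le hfg)]
  · rw [truncate_of_le hi]
    exact truncate_nonneg hm g i

lemma truncate_le (hm : 0 ≤ m) (f : ℕ) : truncate m f ≤ m := by
  intro i
  unfold truncate
  split_ifs
  exacts [le_rfl, hm i]

lemma topSum_mono (hm : 0 ≤ m) : Monotone (topSum m) :=
  fun _ _ hfg => sum_le_sum fun i _ => truncate_mono hm hfg i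

lemma topSum_le_sum (hm : 0 ≤ m) (f : ℕ) : topSum m f ≤ ∑ i, m i :=
  sum_le_sum fun i _ => truncate_le hm f i

lemma topSum_add_const_le {c : ℝ} (hc : 0 ≤ c) (f : ℕ) :
    topSum (m + fun _ => c) f ≤ topSum m f + c * f := by
  have hsplit : topSum (m + fun _ => c) f = topSum m f + #{i : Fin n | i.val < f} * c := by
    rw [topSum, topSum, ← nsmul_eq_mul, ← sum_const, sum_filter, ← sum_add_distrib]
    refine sum_congr rfl fun i _ => ?_
    unfold truncate
    split_ifs <;> simp
  have hcard : #{i : Fin n | i.val < f} ≤ f := by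
    rw [Fin.card_filter_val_lt]
    exact min_le_right n f
  rw [hsplit, mul_comm c]
  gcongr

lemma mul_le_topSum_succ (hm : Antitone m) (i : Fin n) :
    (i.val + 1 : ℕ) * m i ≤ topSum m (i.val + 1) := by
  have hle : ∑ j : Fin n with j.val < i.val + 1, m i ≤ topSum m (i.val + 1) := by
    rw [sum_filter]
    refine sum_le_sum fun j _ => ?_
    unfold truncate
    split_ifs with h
    exacts [hm (Nat.lt_succ_iff.mp h), le_rfl]
  rwa [sum_const, Fin.card_filter_val_lt, min_eq_right i.2, nsmul_eq_mul] at hle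

lemma sum_mul_le_topSum (hm : Antitone m) (hm0 : 0 ≤ m) {w : Fin n → ℝ} (hw0 : 0 ≤ w)
    (hw1 : w ≤ 1) {k : ℕ} (hk : ∑ i, w i ≤ k) : ∑ i, m i * w i ≤ topSum m k := by
  rcases le_or_gt n k with hnk | hkn
  · refine sum_le_sum fun i _ => ?_
    rw [truncate_of_lt (i.2.trans_le hnk)]
    exact mul_le_of_le_one_right (hm0 i) (hw1 i)
  set c := m ⟨k, hkn⟩
  -- Moving weight across the threshold index `k` costs at least `c` per unit.
  have hpoint (i : Fin n) :
      m i * w i ≤ truncate m k i + c * (w i - if i.val < k then 1 else 0) := by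
    rcases lt_or_ge i.val k with hi | hi
    · have hci : c ≤ m i := hm (Fin.le_def.mpr hi.le)
      have hwi : w i ≤ 1 := hw1 i
      rw [truncate_of_lt hi, if_pos hi]
      nlinarith
    · have hci : m i ≤ c := hm (Fin.le_def.mpr hi)
      rw [truncate_of_le hi, if_neg hi.not_gt, zero_add, sub_zero]
      exact mul_le_mul_of_nonneg_right hci (hw0 i)
  have hcount : (∑ i : Fin n, if i.val < k then (1 : ℝ) else 0) = k := by
    rw [sum_boole, Fin.card_filter_val_lt, min_eq_right hkn.le]
  calc ∑ i, m i * w i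
      ≤ ∑ i, (truncate m k i + c * (w i - if i.val < k then 1 else 0)) :=
        sum_le_sum fun i _ => hpoint i
    _ = topSum m k + c * (∑ i, w i - k) := by
        rw [sum_add_distrib, ← mul_sum, sum_sub_distrib, hcount, topSum]
    _ ≤ topSum m k :=
        add_le_of_nonpos_right (mul_nonpos_of_nonneg_of_nonpos (hm0 _) (sub_nonpos.mpr hk))

lemma spectralMatrix_truncate {α : Type*} (V : Matrix (Fin n) α ℝ) (m : Fin n → ℝ) {f : ℕ}
    (hf : f ≤ n) :
    spectralMatrix V (truncate m f) =
      spectralMatrix (V.submatrix (Fin.castLE hf) id) (m ∘ Fin.castLE hf) := by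
  rw [← spectralMatrix_submatrix_of_injective (Fin.castLE_injective hf)]
  · congr 1
    ext j
    exact truncate_of_lt j.2
  · intro i hi
    exact truncate_of_le (not_lt.mp fun hif => hi ⟨⟨i, hif⟩, rfl⟩)

variable {α : Type*} [Fintype α]

lemma sum_sq_row_eq_one {ι : Type*} [DecidableEq ι] {W : Matrix ι α ℝ} (hW : W * Wᵀ = 1)
    (i : ι) : ∑ a, W i a ^ 2 = 1 := by
  simpa only [mul_apply, transpose_apply, ← sq, one_apply_eq] using congrFun (congrFun hW i) i

lemma eigenvalues_le_of_le_spectralMatrix {ι : Type*} [Fintype ι] [DecidableEq ι] [DecidableEq α]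
    {V : Matrix ι α ℝ} {m : ι → ℝ} {N : Matrix α α ℝ} (hN : N.IsHermitian)
    (hle : N ≤ spectralMatrix V m) (a : α) :
    hN.eigenvalues a ≤ ∑ i, m i * (V * (hN.eigenvectorUnitary : Matrix α α ℝ)) i a ^ 2 := by
  set U : Matrix α α ℝ := ↑hN.eigenvectorUnitary
  have hdiag : Uᵀ * N * U = diagonal hN.eigenvalues := by
    have := hN.conjStarAlgAut_star_eigenvectorUnitary
    rwa [Unitary.conjStarAlgAut_apply] at this
  have hconj : Uᵀ * (spectralMatrix V m - N) * U =
      spectralMatrix (V * U) m - diagonal hN.eigenvalues := by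
    rw [Matrix.mul_sub, Matrix.sub_mul, hdiag]
    simp only [spectralMatrix, transpose_mul, Matrix.mul_assoc]
  have h := (hle.conjTranspose_mul_mul_same U).diag_nonneg (i := a)
  rw [conjTranspose_eq_transpose_of_trivial, hconj, Matrix.sub_apply, diagonal_apply_eq,
    spectralMatrix_apply, sub_nonneg] at h
  simpa only [sq] using h

lemma trace_le_topSum_rank [DecidableEq α] {V : Matrix (Fin n) α ℝ} (hV : V * Vᵀ = 1)
    (hV' : Vᵀ * V = 1) (hm : Antitone m) (hm0 : 0 ≤ m) {N : Matrix α α ℝ} (hN : N.IsHermitian)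
    (hle : N ≤ spectralMatrix V m) : N.trace ≤ topSum m N.rank := by
  set U : Matrix α α ℝ := ↑hN.eigenvectorUnitary
  have hU : Uᵀ * U = 1 := Unitary.coe_star_mul_self hN.eigenvectorUnitary
  have hU' : U * Uᵀ = 1 := Unitary.coe_mul_star_self hN.eigenvectorUnitary
  have hrow (i : Fin n) : ∑ a, (V * U) i a ^ 2 = 1 := by
    refine sum_sq_row_eq_one ?_ i
    rw [transpose_mul, Matrix.mul_assoc, ← Matrix.mul_assoc U, hU', Matrix.one_mul, hV]
  have hcol (a : α) : ∑ i, (V * U) i a ^ 2 = 1 := by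
    refine sum_sq_row_eq_one (W := (V * U)ᵀ) ?_ a
    rw [transpose_transpose, transpose_mul, Matrix.mul_assoc, ← Matrix.mul_assoc Vᵀ, hV',
      Matrix.one_mul, hU]
  set S : Finset α := {a | hN.eigenvalues a ≠ 0}
  have hS : N.rank = #S := by
    rw [hN.rank_eq_card_non_zero_eigs, Fintype.card_subtype]
  calc N.trace = ∑ a ∈ S, hN.eigenvalues a := by
        rw [sum_filter_ne_zero]
        exact hN.trace_eq_sum_eigenvalues
    _ ≤ ∑ a ∈ S, ∑ i, m i * (V * U) i a ^ 2 :=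
        sum_le_sum fun a _ => eigenvalues_le_of_le_spectralMatrix hN hle a
    _ = ∑ i, m i * ∑ a ∈ S, (V * U) i a ^ 2 := by
        rw [sum_comm]
        simp only [mul_sum]
    _ ≤ topSum m N.rank := by
        refine sum_mul_le_topSum hm hm0 (fun i => sum_nonneg fun a _ => sq_nonneg _)
          (fun i => ?_) ?_
        · exact (sum_le_univ_sum_of_nonneg fun a => sq_nonneg _).trans (hrow i).le
        · rw [sum_comm, hS]
          simp only [hcol, sum_const, nsmul_eq_mul, mul_one, le_refl]

lemma sq_topSum_le [DecidableEq α] {V : Matrix (Fin n) α ℝ} (hV : V * Vᵀ = 1) (hV' : Vᵀ * V = 1)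
    (hm : Antitone m) (hm0 : 0 ≤ m) {c : ℝ} (hc : 0 ≤ c)
    (hM : spectralMatrix V m ⊙ spectralMatrix V m ≤ spectralMatrix V m + c • 1) {f : ℕ}
    (hf : f ≤ n) : topSum m f ^ 2 ≤ Fintype.card α * (topSum m (f ^ 2) + c * (f : ℝ) ^ 2) := by
  set L := spectralMatrix V (truncate m f)
  have hL : L.PosSemidef := posSemidef_spectralMatrix V (truncate_nonneg hm0 f)
  have hrank : (L ⊙ L).rank ≤ f ^ 2 := by
    simpa only [L, spectralMatrix_truncate V m hf, Fintype.card_fin] using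
      rank_spectralMatrix_hadamard_self_le (V.submatrix (Fin.castLE hf) id) (m ∘ Fin.castLE hf)
  have hle : L ⊙ L ≤ spectralMatrix V (m + fun _ => c) := by
    rw [spectralMatrix_add, spectralMatrix_const hV']
    exact (hadamard_self_le_hadamard_self (nonneg_iff_posSemidef.mpr hL)
      (spectralMatrix_le_spectralMatrix V (truncate_le hm0 f))).trans hM
  have hmc : 0 ≤ m + fun _ => c := fun i => add_nonneg (hm0 i) hc
  calc topSum m f ^ 2 = L.trace ^ 2 := by rw [trace_spectralMatrix hV, topSum]
    _ ≤ Fintype.card α * (L ⊙ L).trace := sq_trace_le_card_mul_trace_hadamard_self L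
    _ ≤ Fintype.card α * (topSum m (f ^ 2) + c * (f : ℝ) ^ 2) := by
        gcongr
        calc (L ⊙ L).trace ≤ topSum (m + fun _ => c) (L ⊙ L).rank :=
              trace_le_topSum_rank hV hV' (hm.add_const c) hmc (hL.hadamard hL).isHermitian hle
          _ ≤ topSum (m + fun _ => c) (f ^ 2) := topSum_mono hmc hrank
          _ ≤ topSum m (f ^ 2) + c * (f : ℝ) ^ 2 := by
              exact_mod_cast topSum_add_const_le hc (f ^ 2)

end Truncation

section Growth

open Finset

lemma rpow_mul_div_le_rpow {α x y : ℝ} (hα : α ≤ 1) (hx : 0 < x) (hxy : x ≤ y) :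
    y ^ α * x / y ≤ x ^ α := by
  have hy : 0 < y := hx.trans_le hxy
  have hanti : y ^ (α - 1) ≤ x ^ (α - 1) := Real.rpow_le_rpow_of_nonpos hx hxy (by linarith)
  calc y ^ α * x / y = y ^ (α - 1) * x := by rw [Real.rpow_sub_one hy.ne']; ring
    _ ≤ x ^ (α - 1) * x := by gcongr
    _ = x ^ α := by rw [Real.rpow_sub_one hx.ne', div_mul_cancel₀ _ hx.ne']

lemma lt_two_mul_rpow_of_sq_le_add {α : ℝ} (hα0 : 0 ≤ α) (hα1 : α ≤ 1) {n : ℕ} {s : ℕ → ℝ}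
    (hs : ∀ f, f ^ 2 ≤ n → s f ^ 2 ≤ s (f ^ 2) + (n : ℝ) ^ α * (f : ℝ) ^ 2 / n)
    (hb : ∀ f, s f ≤ (n : ℝ) ^ (α / 2)) {f : ℕ} (hf : 2 ≤ f) : s f < 2 * (f : ℝ) ^ α := by
  have hf0 : (0 : ℝ) < f := by exact_mod_cast two_pos.trans_le hf
  have hpos : 0 < (f : ℝ) ^ α := Real.rpow_pos_of_pos hf0 α
  rcases lt_or_ge n (f ^ 2) with hnf | hfn
  · have hcap : (n : ℝ) ^ (α / 2) ≤ (f : ℝ) ^ α := by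
      calc (n : ℝ) ^ (α / 2) ≤ ((f : ℝ) ^ (2 : ℝ)) ^ (α / 2) := by
            gcongr
            exact_mod_cast hnf.le
        _ = (f : ℝ) ^ α := by rw [← Real.rpow_mul hf0.le, mul_div_cancel₀ α two_ne_zero]
    linarith [hb f]
  -- Descend from `f ^ 2` to `f`: the constant survives because `2 + 1 < 2 ^ 2`.
  · have hlt : f < f ^ 2 := by nlinarith
    have hnext : s (f ^ 2) < 2 * ((f ^ 2 : ℕ) : ℝ) ^ α :=
      lt_two_mul_rpow_of_sq_le_add hα0 hα1 hs hb (hf.trans hlt.le)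
    have herr : (n : ℝ) ^ α * (f : ℝ) ^ 2 / n ≤ ((f : ℝ) ^ 2) ^ α :=
      rpow_mul_div_le_rpow hα1 (by positivity) (by exact_mod_cast hfn)
    rw [Nat.cast_pow, ← Real.rpow_pow_comm hf0.le] at hnext
    rw [← Real.rpow_pow_comm hf0.le] at herr
    nlinarith [hs f hfn]
  termination_by n - f

lemma exists_forall_sum_fin_le {g : ℕ → ℝ} (hg : Summable g) {δ : ℝ} (hδ : 0 < δ) :
    ∃ K, ∀ n, ∑ i : Fin n with K ≤ i.val, g i ≤ δ := by
  obtain ⟨t, ht⟩ := summable_iff_vanishing_norm.mp hg δ hδ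
  refine ⟨t.sup id + 1, fun n => ?_⟩
  have hdisj : Disjoint ((univ.filter fun i : Fin n => t.sup id + 1 ≤ i.val).map Fin.valEmbedding)
      t := by
    refine disjoint_left.mpr fun k hk hkt => ?_
    obtain ⟨i, hi, rfl⟩ := mem_map.mp hk
    exact (mem_filter.mp hi).2.not_gt (Nat.lt_succ_of_le (le_sup (f := id) hkt))
  have hlt := ht _ hdisj
  rw [sum_map] at hlt
  exact (le_abs_self _).trans hlt.le

lemma le_two_mul_rpow_of_topSum_le {α : ℝ} {n : ℕ} {m : Fin n → ℝ} (hm : Antitone m)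
    (hgrowth : ∀ f, 2 ≤ f → topSum m f ≤ n * (2 * (f : ℝ) ^ α)) {i : Fin n} (hi : 1 ≤ i.val) :
    m i ≤ 2 * n * ((i.val + 1 : ℕ) : ℝ) ^ (α - 1) := by
  have hk : (0 : ℝ) < (i.val + 1 : ℕ) := Nat.cast_pos.mpr i.val.succ_pos
  have hle := (mul_le_topSum_succ hm i).trans (hgrowth (i.val + 1) (Nat.succ_le_succ hi))
  rw [Real.rpow_sub_one hk.ne', ← mul_div_assoc, le_div_iff₀ hk]
  linarith

lemma exists_sum_sq_sub_truncate_le {α : ℝ} (hα : α < 1 / 2) {δ : ℝ} (hδ : 0 < δ) :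
    ∃ f₁ ≥ 2, ∀ (n : ℕ) (m : Fin n → ℝ), Antitone m → 0 ≤ m →
      (∀ f, 2 ≤ f → topSum m f ≤ n * (2 * (f : ℝ) ^ α)) →
      ∑ i, (m - truncate m f₁) i ^ 2 ≤ δ * (n : ℝ) ^ 2 := by
  have hsummable : Summable fun k : ℕ => ((k + 1 : ℕ) : ℝ) ^ (2 * (α - 1)) :=
    (summable_nat_add_iff 1).mpr (Real.summable_nat_rpow.mpr (by linarith))
  obtain ⟨K, hK⟩ := exists_forall_sum_fin_le hsummable (by positivity : 0 < δ / 4)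
  refine ⟨max K 2, le_max_right K 2, fun n m hm hm0 hgrowth => ?_⟩
  have hterm (i : Fin n) : (m - truncate m (max K 2)) i ^ 2 ≤
      if K ≤ i.val then 4 * (n : ℝ) ^ 2 * ((i.val + 1 : ℕ) : ℝ) ^ (2 * (α - 1)) else 0 := by
    rw [Pi.sub_apply]
    rcases lt_or_ge i.val (max K 2) with hi | hi
    · rw [truncate_of_lt hi, sub_self, zero_pow two_ne_zero]
      positivity
    · rw [truncate_of_le hi, sub_zero, if_pos ((le_max_left K 2).trans hi)]
      calc m i ^ 2 ≤ (2 * n * ((i.val + 1 : ℕ) : ℝ) ^ (α - 1)) ^ 2 := by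
            gcongr
            · exact hm0 i
            · exact le_two_mul_rpow_of_topSum_le hm hgrowth
                (one_le_two.trans ((le_max_right K 2).trans hi))
        _ = 4 * (n : ℝ) ^ 2 * ((i.val + 1 : ℕ) : ℝ) ^ (2 * (α - 1)) := by
            rw [mul_comm 2 (α - 1), Real.rpow_mul (Nat.cast_nonneg _), Real.rpow_two]
            ring
  calc ∑ i, (m - truncate m (max K 2)) i ^ 2
      ≤ ∑ i, if K ≤ i.val then 4 * (n : ℝ) ^ 2 * ((i.val + 1 : ℕ) : ℝ) ^ (2 * (α - 1)) else 0 :=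
        sum_le_sum fun i _ => hterm i
    _ = 4 * (n : ℝ) ^ 2 * ∑ i : Fin n with K ≤ i.val, ((i.val + 1 : ℕ) : ℝ) ^ (2 * (α - 1)) := by
        rw [← sum_filter, ← mul_sum]
    _ ≤ 4 * (n : ℝ) ^ 2 * (δ / 4) := by gcongr; exact hK n
    _ = δ * (n : ℝ) ^ 2 := by ring

end Growth

section Geometry

open Finset

lemma card_filter_lt_mul_le_sum {ι : Type*} [Fintype ι] {f : ι → ℝ} (hf : 0 ≤ f) (t : ℝ) :
    #{i | t < f i} * t ≤ ∑ i, f i := by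
  calc #{i | t < f i} * t = ∑ i with t < f i, t := by rw [sum_const, nsmul_eq_mul]
    _ ≤ ∑ i with t < f i, f i := sum_le_sum fun i hi => (mem_filter.mp hi).2.le
    _ ≤ ∑ i, f i := sum_le_univ_sum_of_nonneg hf

section Norm

variable {E V : Type*} [NormedAddCommGroup E]

lemma sq_norm_le_of_sq_norm_sum_le [NormedSpace ℝ E] {y : V → E} {S : Finset V} {l : ℝ}
    (hlarge : 20 * l ≤ #S) (hdiam : ∀ u ∈ S, ∀ w ∈ S, ‖y u - y w‖ ≤ 1 / 50)
    (hsum : ‖∑ w ∈ S, y w‖ ^ 2 ≤ (#S : ℝ) ^ 2 + l * #S) {u : V} (hu : u ∈ S) :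
    ‖y u‖ ^ 2 ≤ 11 / 10 := by
  have hS : (0 : ℝ) < #S := Nat.cast_pos.mpr (card_pos.mpr ⟨u, hu⟩)
  have hsum' : ‖∑ w ∈ S, y w‖ ≤ #S * (41 / 40) := by
    refine le_of_sq_le_sq ?_ (by positivity)
    nlinarith
  have hdev : ‖(#S : ℝ) • y u - ∑ w ∈ S, y w‖ ≤ #S * (1 / 50) := by
    rw [Nat.cast_smul_eq_nsmul, ← sum_const, ← sum_sub_distrib, ← nsmul_eq_mul]
    exact (norm_sum_le _ _).trans (sum_le_card_nsmul _ _ _ fun w hw => hdiam u hu w hw)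
  have hmean : #S * ‖y u‖ ≤ #S * (1 / 50 + 41 / 40) := by
    calc #S * ‖y u‖ = ‖(#S : ℝ) • y u‖ := by rw [norm_smul, Real.norm_natCast]
      _ ≤ ‖(#S : ℝ) • y u - ∑ w ∈ S, y w‖ + ‖∑ w ∈ S, y w‖ := norm_le_norm_sub_add _ _
      _ ≤ #S * (1 / 50 + 41 / 40) := by linarith
  have hnorm := le_of_mul_le_mul_left hmean hS
  nlinarith only [norm_nonneg (y u), hnorm]

variable [Fintype V]

lemma card_sq_norm_gt_le_of_cover [NormedSpace ℝ E] {r l : ℝ} (hr : 0 ≤ r) (hl : 0 ≤ l)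
    {T : Finset E} (hT : Metric.closedBall (0 : E) r ⊆ ⋃ x ∈ T, Metric.ball x (1 / 100))
    {y : V → E} (hsum : ∀ S : Finset V, ‖∑ u ∈ S, y u‖ ^ 2 ≤ (#S : ℝ) ^ 2 + l * #S) :
    (#{u | 11 / 10 < ‖y u‖ ^ 2} : ℝ) ≤ #{u | r ^ 2 < ‖y u‖ ^ 2} + #T * (20 * l) := by
  classical
  let cell (x : E) : Finset V := {u | y u ∈ Metric.ball x (1 / 100)}
  set Tsmall : Finset E := {x ∈ T | (#(cell x) : ℝ) < 20 * l}
  have hsub : ({u | 11 / 10 < ‖y u‖ ^ 2} : Finset V) ⊆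
      ({u | r ^ 2 < ‖y u‖ ^ 2} : Finset V) ∪ Tsmall.biUnion cell := by
    intro u hu
    rw [mem_filter_univ] at hu
    rw [mem_union, mem_filter_univ, or_iff_not_imp_left, not_lt, sq_le_sq₀ (norm_nonneg _) hr,
      ← mem_closedBall_zero_iff]
    intro hur
    obtain ⟨x, hxT, hux⟩ := Set.mem_iUnion₂.mp (hT hur)
    have hucell : u ∈ cell x := (mem_filter_univ _).mpr hux
    refine mem_biUnion.mpr ⟨x, mem_filter.mpr ⟨hxT, ?_⟩, hucell⟩
    by_contra! hlarge
    have hdiam : ∀ v ∈ cell x, ∀ w ∈ cell x, ‖y v - y w‖ ≤ 1 / 50 := by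
      intro v hv w hw
      have hvx : dist (y v) x < 1 / 100 := (mem_filter_univ v).mp hv
      have hwx : dist (y w) x < 1 / 100 := (mem_filter_univ w).mp hw
      rw [← dist_eq_norm]
      linarith [dist_triangle_right (y v) (y w) x]
    exact hu.not_ge (sq_norm_le_of_sq_norm_sum_le hlarge hdiam (hsum (cell x)) hucell)
  have hsmall : (#(Tsmall.biUnion cell) : ℝ) ≤ #T * (20 * l) := by
    calc (#(Tsmall.biUnion cell) : ℝ) ≤ ∑ x ∈ Tsmall, (#(cell x) : ℝ) := by
          exact_mod_cast card_biUnion_le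
      _ ≤ #Tsmall * (20 * l) := by
          rw [← nsmul_eq_mul]
          exact sum_le_card_nsmul _ _ _ fun x hx => (mem_filter.mp hx).2.le
      _ ≤ #T * (20 * l) := by
          gcongr
          exact filter_subset _ _
  calc (#{u | 11 / 10 < ‖y u‖ ^ 2} : ℝ)
      ≤ #{u | r ^ 2 < ‖y u‖ ^ 2} + #(Tsmall.biUnion cell) := by
        exact_mod_cast (card_le_card hsub).trans (card_union_le _ _)
    _ ≤ #{u | r ^ 2 < ‖y u‖ ^ 2} + #T * (20 * l) := by gcongr

end Norm

lemma exists_card_sq_norm_gt_le (E : Type*) [NormedAddCommGroup E] [NormedSpace ℝ E] [ProperSpace E]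
    {C κ : ℝ} (hC : 0 < C) (hκ : 0 < κ) :
    ∃ N : ℕ, ∀ {V : Type*} [Fintype V] {l : ℝ} {y : V → E}, 0 ≤ l →
      ∑ u, ‖y u‖ ^ 2 ≤ C * Fintype.card V →
      (∀ S : Finset V, ‖∑ u ∈ S, y u‖ ^ 2 ≤ (#S : ℝ) ^ 2 + l * #S) →
      (#{u | 11 / 10 < ‖y u‖ ^ 2} : ℝ) ≤ κ * Fintype.card V + N * (20 * l) := by
  obtain ⟨T, -, hTfin, hT⟩ := (isCompact_closedBall (0 : E) √(C / κ)).finite_cover_balls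
    (e := 1 / 100) (by norm_num)
  refine ⟨#hTfin.toFinset, fun {V _ l y} hl hnorm hsum => ?_⟩
  refine (card_sq_norm_gt_le_of_cover (T := hTfin.toFinset) (Real.sqrt_nonneg (C / κ)) hl
    (by simpa only [Set.Finite.mem_toFinset] using hT) hsum).trans ?_
  gcongr
  have hmarkov := (card_filter_lt_mul_le_sum (fun u => sq_nonneg ‖y u‖) (√(C / κ) ^ 2)).trans hnorm
  refine le_of_mul_le_mul_right (hmarkov.trans_eq ?_) (by positivity : 0 < √(C / κ) ^ 2)
  rw [Real.sq_sqrt (by positivity)]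
  field_simp

lemma four_mul_inner_add_inner_le {E : Type*} [NormedAddCommGroup E] [InnerProductSpace ℝ E]
    (a b c : E) :
    4 * (inner ℝ a b + inner ℝ b c) ≤ ‖a‖ ^ 2 + ‖c‖ ^ 2 + 4 * ‖b‖ ^ 2 + 2 * inner ℝ a c := by
  have hsq := sq_nonneg ‖a + c - (2 : ℝ) • b‖
  rw [norm_sub_sq_real, norm_add_sq_real, inner_smul_right, inner_add_left, norm_smul, mul_pow,
    real_inner_comm b c, Real.norm_two] at hsq
  linarith

end Geometry

section Pivot

open Finset

variable {V : Type*}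

/-- The vertices `u, v, w` form a cherry, that is, an induced path with centre `v`. A graph is a
disjoint union of cliques exactly when it has none. -/
def IsCherry (G : SimpleGraph V) (u v w : V) : Prop :=
  G.Adj u v ∧ G.Adj v w ∧ u ≠ w ∧ ¬G.Adj u w

open scoped Classical in
/-- The mistakes of the clustering of the vertex set `R` into the fibres of `c`: adjacent pairs that
are separated and non-adjacent pairs that are merged. Each mistake is listed in both orders. -/
noncomputable def mistakes (G : SimpleGraph V) (R : Finset V) (c : V → V) : Finset (V × V) :=
  {t ∈ R ×ˢ R | t.1 ≠ t.2 ∧ ¬(G.Adj t.1 t.2 ↔ c t.1 = c t.2)}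

/-- The graph whose components are cliques on the nonempty fibres of `c`. -/
def fibreCliques {β : Type*} (c : V → β) : SimpleGraph V where
  Adj u w := u ≠ w ∧ c u = c w
  symm := ⟨fun _ _ h => ⟨h.1.symm, h.2.symm⟩⟩
  loopless := ⟨fun _ h => h.1 rfl⟩

lemma fibreCliques_reachable {β : Type*} {c : V → β} {u w : V}
    (h : (fibreCliques c).Reachable u w) : c u = c w := by
  obtain ⟨p⟩ := h
  induction p with
  | nil => rfl
  | cons hadj _ ih => exact hadj.2.trans ih

variable [Fintype V] (G : SimpleGraph V)

open scoped Classical in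
/-- The cherries of `G`; each induced path is listed in both directions. -/
noncomputable def cherries : Finset (V × V × V) :=
  {t | IsCherry G t.1 t.2.1 t.2.2}

open scoped Classical in
/-- The pairs that extend `p` to a cherry, `p` being first, in the middle, or last. -/
noncomputable def cherryPairs (p : V) : Finset (V × V) :=
  {t | IsCherry G p t.1 t.2 ∨ IsCherry G t.1 p t.2 ∨ IsCherry G t.1 t.2 p}

lemma sum_card_cherryPairs_le : ∑ p, #(cherryPairs G p) ≤ 3 * #(cherries G) := by
  classical
  let I (u v w : V) : ℕ := if IsCherry G u v w then 1 else 0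
  have hcard : #(cherries G) = ∑ u, ∑ v, ∑ w, I u v w := by
    simp only [cherries, card_filter, Fintype.sum_prod_type, I]
  have hpair (p : V) : #(cherryPairs G p) ≤ ∑ u, ∑ w, (I p u w + I u p w + I u w p) := by
    rw [cherryPairs, card_filter, Fintype.sum_prod_type]
    gcongr with u _ w
    simp only [I]
    split_ifs <;> simp_all
  have hmid : ∑ p, ∑ u, ∑ w, I u p w = #(cherries G) := by rw [hcard, sum_comm]
  have hlast : ∑ p, ∑ u, ∑ w, I u w p = #(cherries G) := by
    rw [hcard, sum_comm]
    exact sum_congr rfl fun u _ => sum_comm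
  calc ∑ p, #(cherryPairs G p) ≤ ∑ p, ∑ u, ∑ w, (I p u w + I u p w + I u w p) :=
        sum_le_sum fun p _ => hpair p
    _ = 3 * #(cherries G) := by
        simp only [sum_add_distrib, hmid, hlast, ← hcard]
        ring

open scoped Classical in
lemma exists_pivot {a b : ℝ} (ha : 0 ≤ a) (hcherries : 3 * (#(cherries G) : ℝ) ≤ a * b)
    {R : Finset V} (hR : R.Nonempty) (hb : b ≤ #{t ∈ R ×ˢ R | G.Adj t.1 t.2}) :
    ∃ p ∈ R, (#(cherryPairs G p) : ℝ) ≤ a * #{u ∈ R | G.Adj p u} := by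
  have hadj : #{t ∈ R ×ˢ R | G.Adj t.1 t.2} = ∑ p ∈ R, #{u ∈ R | G.Adj p u} := by
    simp only [card_filter, sum_product]
  refine exists_le_of_sum_le hR ?_
  calc ∑ p ∈ R, (#(cherryPairs G p) : ℝ) ≤ ∑ p, (#(cherryPairs G p) : ℝ) :=
        sum_le_univ_sum_of_nonneg fun p => Nat.cast_nonneg _
    _ ≤ 3 * #(cherries G) := by exact_mod_cast sum_card_cherryPairs_le G
    _ ≤ a * #{t ∈ R ×ˢ R | G.Adj t.1 t.2} := hcherries.trans (by gcongr)
    _ = ∑ p ∈ R, a * #{u ∈ R | G.Adj p u} := by rw [hadj, Nat.cast_sum, mul_sum]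

lemma mistakes_pivot_subset [DecidableEq V] {R N : Finset V} {p : V} {c : V → V}
    (hN : ∀ u, u ∈ N ↔ u ∈ R ∧ (u = p ∨ G.Adj p u)) (hc : ∀ u ∈ R \ N, c u ≠ p) :
    mistakes G R (fun u => if u ∈ N then p else c u) ⊆
      mistakes G (R \ N) c ∪ cherryPairs G p := by
  rintro ⟨u, w⟩ h
  simp only [mistakes, cherryPairs, IsCherry, mem_union, mem_filter, mem_product,
    mem_sdiff] at h hc ⊢
  have hsymm := G.adj_comm
  -- If `u, w ∈ N`, then `p` is the centre of a cherry; if exactly one of them is, `p` is an end.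
  grind

lemma exists_card_mistakes_le {a b : ℝ} (ha : 0 ≤ a) (hb : 0 ≤ b)
    (hcherries : 3 * (#(cherries G) : ℝ) ≤ a * b) (R : Finset V) :
    ∃ c : V → V, (∀ u ∈ R, c u ∈ R) ∧ (#(mistakes G R c) : ℝ) ≤ a * #R + b := by
  classical
  induction R using Finset.strongInduction with | H R ih
  rcases le_total (#{t ∈ R ×ˢ R | G.Adj t.1 t.2} : ℝ) b with hfew | hmany
  · have hsub : mistakes G R id ⊆ {t ∈ R ×ˢ R | G.Adj t.1 t.2} :=
      monotone_filter_right _ fun t _ ht => by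
        simp only [id] at ht
        tauto
    refine ⟨id, fun u hu => hu, ?_⟩
    calc (#(mistakes G R id) : ℝ) ≤ b := (Nat.cast_le.mpr (card_le_card hsub)).trans hfew
      _ ≤ a * #R + b := le_add_of_nonneg_left (by positivity)
  rcases R.eq_empty_or_nonempty with rfl | hR
  · exact ⟨id, by simp, by simpa [mistakes] using hb⟩
  obtain ⟨p, hpR, hp⟩ := exists_pivot G ha hcherries hR hmany
  set N : Finset V := {u ∈ R | u = p ∨ G.Adj p u} with hNdef
  have hpN : p ∈ N := mem_filter.mpr ⟨hpR, Or.inl rfl⟩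
  have hNR : N ⊆ R := filter_subset _ R
  obtain ⟨c, hcR, hc⟩ := ih (R \ N) (sdiff_ssubset hNR ⟨p, hpN⟩)
  refine ⟨fun u => if u ∈ N then p else c u, fun u hu => ?_, ?_⟩
  · dsimp only
    split_ifs with huN
    exacts [hpR, (mem_sdiff.mp (hcR u (mem_sdiff.mpr ⟨hu, huN⟩))).1]
  have hsub := mistakes_pivot_subset G (N := N) (c := c) (fun u => by rw [hNdef, mem_filter])
    fun u hu hup => (mem_sdiff.mp (hcR u hu)).2 (by rwa [hup])
  have hdeg : #{u ∈ R | G.Adj p u} ≤ #N :=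
    card_le_card (monotone_filter_right _ fun u _ => Or.inr)
  have hcard : (#(R \ N) : ℝ) + #N = #R := by
    exact_mod_cast card_sdiff_add_card_eq_card hNR
  calc (#(mistakes G R fun u => if u ∈ N then p else c u) : ℝ)
      ≤ #(mistakes G (R \ N) c) + #(cherryPairs G p) := by
        exact_mod_cast (card_le_card hsub).trans (card_union_le _ _)
    _ ≤ (a * #(R \ N) + b) + a * #N := by
        gcongr
        exact hp.trans (by gcongr)
    _ = a * #R + b := by rw [← hcard]; ring

lemma ncard_symmDiff_fibreCliques_le (c : V → V) :
    (symmDiff G.edgeSet (fibreCliques c).edgeSet).ncard ≤ #(mistakes G univ c) := by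
  classical
  have hsub : symmDiff G.edgeSet (fibreCliques c).edgeSet ⊆
      (mistakes G univ c).image fun t => s(t.1, t.2) := by
    intro e
    induction e with | h u w
    intro he
    rw [coe_image]
    refine ⟨(u, w), ?_, rfl⟩
    have hne : G.Adj u w → u ≠ w := SimpleGraph.Adj.ne
    simp only [mistakes, fibreCliques, Set.mem_symmDiff, SimpleGraph.mem_edgeSet, coe_filter,
      mem_product, mem_univ, Set.mem_ofPred_eq] at he ⊢
    tauto
  calc _ ≤ (((mistakes G univ c).image fun t => s(t.1, t.2) : Finset (Sym2 V)) :
        Set (Sym2 V)).ncard := Set.ncard_le_ncard hsub (finite_toSet _)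
    _ ≤ #(mistakes G univ c) := by
        rw [Set.ncard_coe_finset]
        exact card_image_le

lemma exists_isUnionOfCliques_ncard_symmDiff_le {ε : ℝ} (hε : 0 ≤ ε)
    (hcherries : 12 * (#(cherries G) : ℝ) ≤ ε ^ 2 * (Fintype.card V : ℝ) ^ 3) :
    ∃ H, IsUnionOfCliques H ∧
      ((symmDiff G.edgeSet H.edgeSet).ncard : ℝ) ≤ ε * (Fintype.card V : ℝ) ^ 2 := by
  obtain ⟨c, -, hc⟩ := exists_card_mistakes_le G (a := ε * Fintype.card V / 2)
    (b := ε * (Fintype.card V : ℝ) ^ 2 / 2) (by positivity) (by positivity) (by linarith) univ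
  refine ⟨fibreCliques c, fun u w h hne => ⟨hne, fibreCliques_reachable h⟩, ?_⟩
  calc ((symmDiff G.edgeSet (fibreCliques c).edgeSet).ncard : ℝ)
      ≤ #(mistakes G univ c) := by exact_mod_cast ncard_symmDiff_fibreCliques_le G c
    _ ≤ ε * (Fintype.card V : ℝ) ^ 2 := by
        rw [card_univ] at hc
        linarith

end Pivot

section Counting

open Finset

variable {V : Type*}

lemma card_triples_le [Fintype V] {T : Finset (V × V × V)} {B : Finset V} {P : Finset (V × V)}
    (h : ∀ u v w, (u, v, w) ∈ T →
      u ∈ B ∨ v ∈ B ∨ w ∈ B ∨ (u, v) ∈ P ∨ (v, w) ∈ P ∨ (u, w) ∈ P) :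
    #T ≤ 3 * #B * Fintype.card V ^ 2 + 3 * #P * Fintype.card V := by
  classical
  let b (u : V) : ℕ := if u ∈ B then 1 else 0
  let p (u v : V) : ℕ := if (u, v) ∈ P then 1 else 0
  have hb : ∑ u, b u = #B := by simp [b]
  have hp : ∑ u, ∑ v, p u v = #P := by
    rw [← Fintype.sum_prod_type' p]
    simp [p]
  calc #T = ∑ u, ∑ v, ∑ w, if (u, v, w) ∈ T then 1 else 0 := by
        have := card_filter (· ∈ T) univ
        simpa only [filter_univ_mem, Fintype.sum_prod_type] using this
    _ ≤ ∑ u, ∑ v, ∑ w, (b u + b v + b w + p u v + p v w + p u w) := by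
        gcongr with u _ v _ w
        have := h u v w
        simp only [b, p]
        split_ifs <;> simp_all
    _ = 3 * #B * Fintype.card V ^ 2 + 3 * #P * Fintype.card V := by
        simp only [sum_add_distrib, sum_const, card_univ, smul_eq_mul, ← mul_sum, hb, hp]
        ring

variable {E : Type*} [NormedAddCommGroup E] [InnerProductSpace ℝ E] {G : SimpleGraph V}

open scoped Classical in
lemma adjMat_apply (u w : V) : adjMat G u w = if G.Adj u w then 1 else 0 := rfl

variable [DecidableEq V]

lemma adjMat_add_smul_one_apply_of_ne (l : ℝ) {u w : V} (h : u ≠ w) :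
    (adjMat G + l • 1) u w = adjMat G u w := by
  simp [Matrix.one_apply_ne h]

lemma IsCherry.exists_sq_gt {u v w : V} (h : IsCherry G u v w) (y : V → E) (l : ℝ) :
    11 / 10 < ‖y u‖ ^ 2 ∨ 11 / 10 < ‖y v‖ ^ 2 ∨ 11 / 10 < ‖y w‖ ^ 2 ∨
      1 / 100 < ((adjMat G + l • 1) u v - inner ℝ (y u) (y v)) ^ 2 ∨
      1 / 100 < ((adjMat G + l • 1) v w - inner ℝ (y v) (y w)) ^ 2 ∨
      1 / 100 < ((adjMat G + l • 1) u w - inner ℝ (y u) (y w)) ^ 2 := by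
  obtain ⟨huv, hvw, hne, huw⟩ := h
  rw [adjMat_add_smul_one_apply_of_ne l huv.ne, adjMat_add_smul_one_apply_of_ne l hvw.ne,
    adjMat_add_smul_one_apply_of_ne l hne, adjMat_apply, adjMat_apply, adjMat_apply, if_pos huv,
    if_pos hvw, if_neg huw, show (1 / 100 : ℝ) = (1 / 10) ^ 2 by norm_num]
  by_contra! hsmall
  obtain ⟨hu, hv, hw, huv', hvw', huw'⟩ := hsmall
  have huv1 := (abs_le_of_sq_le_sq' huv' (by norm_num)).2
  have hvw1 := (abs_le_of_sq_le_sq' hvw' (by norm_num)).2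
  have huw0 := (abs_le_of_sq_le_sq' huw' (by norm_num)).1
  -- `4 * (9 / 10 + 9 / 10) > 6 * (11 / 10) + 2 * (1 / 10)`.
  linarith [four_mul_inner_add_inner_le (y u) (y v) (y w)]

lemma card_cherries_le [Fintype V] {y : V → E} {l δ b : ℝ}
    (hgram : ∑ u, ∑ w, ((adjMat G + l • 1) u w - inner ℝ (y u) (y w)) ^ 2 ≤
      δ * (Fintype.card V : ℝ) ^ 2)
    (hnorm : (#{u | 11 / 10 < ‖y u‖ ^ 2} : ℝ) ≤ b) :
    (#(cherries G) : ℝ) ≤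
      3 * b * (Fintype.card V : ℝ) ^ 2 + 300 * δ * (Fintype.card V : ℝ) ^ 3 := by
  let D (t : V × V) : ℝ := ((adjMat G + l • 1) t.1 t.2 - inner ℝ (y t.1) (y t.2)) ^ 2
  have hpairs : (#{t | 1 / 100 < D t} : ℝ) * (1 / 100) ≤ δ * (Fintype.card V : ℝ) ^ 2 := by
    rw [← Fintype.sum_prod_type'] at hgram
    exact (card_filter_lt_mul_le_sum (fun t => sq_nonneg _) _).trans hgram
  have hcard : #(cherries G) ≤ 3 * #{u | 11 / 10 < ‖y u‖ ^ 2} * Fintype.card V ^ 2 +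
      3 * #{t | 1 / 100 < D t} * Fintype.card V := by
    refine card_triples_le fun u v w h => ?_
    simp only [mem_filter_univ]
    have hcherry : IsCherry G u v w := by simpa only [cherries, mem_filter_univ] using h
    exact hcherry.exists_sq_gt y l
  calc (#(cherries G) : ℝ) ≤ 3 * #{u | 11 / 10 < ‖y u‖ ^ 2} * (Fintype.card V : ℝ) ^ 2 +
        3 * #{t | 1 / 100 < D t} * Fintype.card V := by exact_mod_cast hcard
    _ ≤ 3 * b * (Fintype.card V : ℝ) ^ 2 +
        3 * (100 * (δ * (Fintype.card V : ℝ) ^ 2)) * Fintype.card V := by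
        gcongr
        linarith
    _ = _ := by ring

end Counting

section ShiftedAdjacency

open Finset Matrix
open scoped MatrixOrder

variable {V : Type*} [DecidableEq V] {G : SimpleGraph V}

lemma hadamard_self_adjMat_add_smul_one_le [Finite V] {l : ℝ} (hl : 0 ≤ l) :
    (adjMat G + l • 1) ⊙ (adjMat G + l • 1) ≤ adjMat G + l • 1 + l ^ 2 • 1 := by
  have hsub : adjMat G + l • 1 + l ^ 2 • 1 - (adjMat G + l • 1) ⊙ (adjMat G + l • 1) =
      l • (1 : Matrix V V ℝ) := by
    ext u w
    rcases eq_or_ne u w with rfl | huw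
    · simp only [Matrix.sub_apply, Matrix.add_apply, adjMat_apply, SimpleGraph.irrefl, ↓reduceIte,
        Matrix.smul_apply, one_apply_eq, smul_eq_mul, mul_one, zero_add, hadamard_apply]
      ring
    · have hidem : adjMat G u w * adjMat G u w = adjMat G u w := by simp [adjMat_apply]
      simp [one_apply_ne huw, hidem]
  rw [Matrix.le_iff, hsub]
  exact PosSemidef.one.smul hl

lemma trace_adjMat_add_smul_one [Fintype V] (l : ℝ) :
    (adjMat G + l • 1).trace = Fintype.card V * l := by
  simp [trace, adjMat_apply]

lemma sum_adjMat_add_smul_one_le {l : ℝ} (S : Finset V) :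
    ∑ u ∈ S, ∑ w ∈ S, (adjMat G + l • 1) u w ≤ (#S : ℝ) ^ 2 + l * #S := by
  calc ∑ u ∈ S, ∑ w ∈ S, (adjMat G + l • 1) u w
      ≤ ∑ u ∈ S, ∑ w ∈ S, (1 + if u = w then l else 0) := by
        gcongr with u _ w _
        simp only [Matrix.add_apply, Matrix.smul_apply, one_apply, smul_eq_mul, mul_ite, mul_one,
          mul_zero, adjMat_apply]
        gcongr
        split_ifs <;> norm_num
    _ = (#S : ℝ) ^ 2 + l * #S := by
        simp only [sum_add_distrib, sum_const, nsmul_eq_mul, mul_one, sum_ite_eq, sum_ite_mem,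
          inter_self]
        ring

end ShiftedAdjacency

section LeastEigenvalue

open Finset Matrix Filter
open scoped MatrixOrder

lemma topSum_le_mul_two_mul_rpow {α : ℝ} (hα0 : 0 ≤ α) (hα1 : α ≤ 1) {n : ℕ} (hn : 0 < n)
    {G : SimpleGraph (Fin n)} {V : Matrix (Fin n) (Fin n) ℝ} (hV : V * Vᵀ = 1) {m : Fin n → ℝ}
    (hm : Antitone m) (hm0 : 0 ≤ m)
    (hM : spectralMatrix V m = adjMat G + (n : ℝ) ^ (α / 2) • 1) {f : ℕ} (hf : 2 ≤ f) :
    topSum m f ≤ n * (2 * (f : ℝ) ^ α) := by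
  have hn' : (0 : ℝ) < n := Nat.cast_pos.mpr hn
  have hpow : ((n : ℝ) ^ (α / 2)) ^ 2 = (n : ℝ) ^ α := by
    rw [← Real.rpow_mul_natCast hn'.le, Nat.cast_ofNat, div_mul_cancel₀ _ two_ne_zero]
  have hschur : spectralMatrix V m ⊙ spectralMatrix V m ≤
      spectralMatrix V m + (n : ℝ) ^ α • 1 := by
    rw [hM, ← hpow]
    exact hadamard_self_adjMat_add_smul_one_le (by positivity)
  have hsum : ∑ i, m i = n * (n : ℝ) ^ (α / 2) := by
    rw [← trace_spectralMatrix hV m, hM, trace_adjMat_add_smul_one, Fintype.card_fin]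
  have hrec (k : ℕ) (hk : k ^ 2 ≤ n) : (topSum m k / n) ^ 2 ≤
      topSum m (k ^ 2) / n + (n : ℝ) ^ α * (k : ℝ) ^ 2 / n := by
    have hsq := sq_topSum_le hV (mul_eq_one_comm.mp hV) hm hm0 (by positivity) hschur
      ((Nat.le_self_pow two_ne_zero k).trans hk)
    rw [Fintype.card_fin] at hsq
    rw [div_pow, ← add_div, div_le_div_iff₀ (by positivity) hn']
    nlinarith
  have hcap (k : ℕ) : topSum m k / n ≤ (n : ℝ) ^ (α / 2) := by
    rw [div_le_iff₀' hn', ← hsum]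
    exact topSum_le_sum hm0 k
  have hlt := lt_two_mul_rpow_of_sq_le_add hα0 hα1 hrec hcap hf
  exact ((div_lt_iff₀' hn').mp hlt).le

lemma eventually_mul_rpow_le_mul {β : ℝ} (hβ : β < 1) (c : ℝ) {δ : ℝ} (hδ : 0 < δ) :
    ∀ᶠ n : ℕ in atTop, c * (n : ℝ) ^ β ≤ δ * n := by
  have hlim : Tendsto (fun n : ℕ => c * (n : ℝ) ^ (-(1 - β))) atTop (nhds (c * 0)) :=
    ((tendsto_rpow_neg_atTop (sub_pos.mpr hβ)).comp tendsto_natCast_atTop_atTop).const_mul c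
  rw [mul_zero] at hlim
  filter_upwards [hlim.eventually_le_const hδ, eventually_gt_atTop 0] with n hle hn
  have hn' : (n : ℝ) ≠ 0 := Nat.cast_ne_zero.mpr hn.ne'
  rw [neg_sub, Real.rpow_sub_one hn', ← mul_div_assoc] at hle
  rwa [div_le_iff₀ (by positivity)] at hle

lemma exists_vectors_gram_approx {α : Type*} [Fintype α] [DecidableEq α] {n f : ℕ}
    (hf : f ≤ n) {G : SimpleGraph α} {l : ℝ} {V : Matrix (Fin n) α ℝ} (hV : V * Vᵀ = 1)
    {m : Fin n → ℝ} (hm0 : 0 ≤ m) (hM : spectralMatrix V m = adjMat G + l • 1) :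
    ∃ y : α → EuclideanSpace ℝ (Fin f), ∑ u, ‖y u‖ ^ 2 = topSum m f ∧
      (∀ S : Finset α, ‖∑ u ∈ S, y u‖ ^ 2 ≤ (#S : ℝ) ^ 2 + l * #S) ∧
      ∑ u, ∑ w, ((adjMat G + l • 1) u w - inner ℝ (y u) (y w)) ^ 2 =
        ∑ i, (m - truncate m f) i ^ 2 := by
  obtain ⟨y, hy⟩ := exists_gram_eq_spectralMatrix (V.submatrix (Fin.castLE hf) id)
    (m := m ∘ Fin.castLE hf) fun j => hm0 _
  rw [← spectralMatrix_truncate V m hf] at hy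
  refine ⟨y, ?_, fun S => ?_, ?_⟩
  · rw [topSum, ← trace_spectralMatrix hV (truncate m f), ← hy]
    simp [trace]
  · refine (sq_norm_sum_le_of_gram_le ?_ S).trans (sum_adjMat_add_smul_one_le (G := G) S)
    rw [hy, ← hM]
    exact spectralMatrix_le_spectralMatrix V (truncate_le hm0 f)
  · rw [← sum_sq_spectralMatrix hV, spectralMatrix_sub, hM, ← hy]
    rfl

lemma eventually_card_cherries_le {α : ℝ} (hα0 : 0 ≤ α) (hα : α < 1 / 2) {η : ℝ} (hη : 0 < η) :
    ∀ᶠ n : ℕ in atTop, ∀ (G : SimpleGraph (Fin n)) (V : Matrix (Fin n) (Fin n) ℝ)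
      (m : Fin n → ℝ), V * Vᵀ = 1 → Antitone m → 0 ≤ m →
      spectralMatrix V m = adjMat G + (n : ℝ) ^ (α / 2) • 1 →
      (#(cherries G) : ℝ) ≤ η * (n : ℝ) ^ 3 := by
  obtain ⟨f, hf2, htail⟩ := exists_sum_sq_sub_truncate_le hα (by positivity : 0 < η / 900)
  have hC : 0 < 2 * (f : ℝ) ^ α :=
    mul_pos two_pos (Real.rpow_pos_of_pos (Nat.cast_pos.mpr (two_pos.trans_le hf2)) α)
  obtain ⟨N, hN⟩ := exists_card_sq_norm_gt_le (EuclideanSpace ℝ (Fin f)) hC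
    (by positivity : 0 < η / 9)
  filter_upwards [eventually_ge_atTop f, eventually_mul_rpow_le_mul (by linarith : α / 2 < 1)
    (20 * N) (by positivity : 0 < η / 9)] with n hfn hshift G V m hV hm hm0 hM
  have hn : 0 < n := by omega
  have hgrowth (k : ℕ) (hk : 2 ≤ k) := topSum_le_mul_two_mul_rpow hα0 (by linarith) hn hV hm hm0
    hM hk
  obtain ⟨y, hnorm, hsum, hgram⟩ := exists_vectors_gram_approx hfn hV hm0 hM
  have hlong : (#{u | 11 / 10 < ‖y u‖ ^ 2} : ℝ) ≤ η / 9 * n + N * (20 * (n : ℝ) ^ (α / 2)) := by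
    have := hN (y := y) (by positivity : (0 : ℝ) ≤ (n : ℝ) ^ (α / 2)) ?_ hsum
    · rwa [Fintype.card_fin] at this
    · rw [hnorm, Fintype.card_fin, mul_comm]
      exact hgrowth f hf2
  have hgram' := hgram.trans_le (htail n m hm hm0 hgrowth)
  have hcount := card_cherries_le (b := η / 9 * n + η / 9 * n) (δ := η / 900)
    (by rwa [Fintype.card_fin]) (by linarith)
  rw [Fintype.card_fin] at hcount
  linarith

end LeastEigenvalue

/-- If `G` is `ε`-far from every disjoint union of cliques,
then its least adjacency eigenvalue satisfies `λₙ ≤ -n ^ (1/4 - ε)`. -/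
theorem stmt0 (ε : ℝ) (hε : 0 < ε) :
    ∃ n₀ : ℕ, ∀ (n : ℕ) (hn : n₀ ≤ n) (hn1 : 1 ≤ n)
      (G : SimpleGraph (Fin n)) (μ : Fin n → ℝ) (v : Fin n → Fin n → ℝ),
      Antitone μ →
      (∀ i, (adjMat G).mulVec (v i) = μ i • v i) →
      (∀ i j : Fin n, (∑ k, v i k * v j k) = if i = j then (1 : ℝ) else 0) →
      FarFromCliqueUnions ε G →
      μ ⟨n - 1, by omega⟩ ≤ -((n : ℝ) ^ ((1 : ℝ) / 4 - ε)) := by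
  obtain ⟨n₀, hn₀⟩ := Filter.eventually_atTop.mp (eventually_card_cherries_le
    (le_max_right (1 / 2 - 2 * ε) 0) (max_lt (by linarith) (by norm_num))
    (by positivity : 0 < ε ^ 2 / 12))
  refine ⟨n₀, fun n hn hn1 G μ v hμ heig horth hfar => ?_⟩
  by_contra! hlarge
  let V := Matrix.of v
  have hV : V * V.transpose = 1 := Matrix.ext horth
  have hV' := mul_eq_one_comm.mp hV
  set l := (n : ℝ) ^ (max (1 / 2 - 2 * ε) 0 / 2)
  have hpow : (n : ℝ) ^ ((1 : ℝ) / 4 - ε) ≤ l := Real.rpow_le_rpow_of_exponent_le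
    (Nat.one_le_cast.mpr hn1) (by linarith [le_max_left (1 / 2 - 2 * ε) 0])
  have hpos : 0 ≤ μ + fun _ => l := fun i => by
    have hlast : μ ⟨n - 1, by omega⟩ ≤ μ i := hμ (Fin.le_def.mpr (Nat.le_sub_one_of_lt i.2))
    change 0 ≤ μ i + l
    linarith
  have hspec : spectralMatrix V (μ + fun _ => l) = adjMat G + l • 1 := by
    rw [spectralMatrix_add, spectralMatrix_const hV', ← eq_spectralMatrix_of_mulVec_eq hV' heig]
  have hcherries := hn₀ n hn G V _ hV (hμ.add_const l) hpos hspec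
  obtain ⟨H, hH, hdist⟩ := exists_isUnionOfCliques_ncard_symmDiff_le G hε.le
    (by rw [Fintype.card_fin]; linarith)
  rw [Fintype.card_fin] at hdist
  exact hfar H hH ⟨H, ⟨SimpleGraph.Iso.refl⟩, hdist⟩
end

section
/- For any ε > 0 there exists δ = δ(ε) > 0 such that the following holds for all γ > 0 and all n ≥ n₀(γ, ε): if G is a graph on n vertices whose adjacency eigenvalues satisfy ∑_{i : λ_i < γn} λ_i² ≤ δn², then at least one of the following holds: (1) G is ε-close to a disjoint union of cliques; (2) there is a constant c_{ε,γ} > 0, depending only on ε and γ, such that λ_n ≤ −c_{ε,γ} · n. -/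
/-!
Split `A_G = F + E`, where `F` collects the eigenvalues at least `γ n` and `E` has Frobenius norm
at most `√δ n`. The matrix `F` is a Gram matrix of vectors in a bounded region of a space of
dimension at most `1 / γ ^ 2`. If many of these vectors had squared length above `11 / 10`, then by
pigeonhole linearly many of them would be nearly equal; on that set `T` the entries of `F` would be
larger than `1` by a constant while those of `A_G` are at most `1`, so the indicator of `T` would
force a linearly negative eigenvalue. Otherwise almost all diagonal entries of `F` are at most
`11 / 10`, and positive semidefiniteness of `F` tested on `e_x - e_y + e_z` shows that an induced
path `x y z` contains a heavy vertex or a pair at which `E` is large. There are few such bad pairs,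
and the pivot algorithm turns `G` into a disjoint union of cliques at the cost of three edits per
bad pair: a pivot `p` pays for `x y` only if `p`, `x`, `y` induce a path, each such triple contains
a bad pair, and on average at least a third of the triples have it opposite to the pivot.
-/

open Finset
open scoped symmDiff

section Clustering

variable {V α : Type*} {G B : SimpleGraph V}

/-- The disjoint union of cliques whose parts are the fibres of the labelling `f`. -/
def clusterGraph (f : V → α) : SimpleGraph V :=
  ((⊤ : SimpleGraph α).comap f)ᶜ

lemma clusterGraph_adj {f : V → α} {x y : V} :
    (clusterGraph f).Adj x y ↔ x ≠ y ∧ f x = f y := by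
  simp [clusterGraph]

lemma adj_symmDiff_clusterGraph {f : V → α} {x y : V} :
    (G ∆ clusterGraph f).Adj x y ↔ x ≠ y ∧ ¬(G.Adj x y ↔ f x = f y) := by
  have := @SimpleGraph.Adj.ne V G x y
  simp only [symmDiff, SimpleGraph.sup_adj, SimpleGraph.sdiff_adj, clusterGraph_adj]
  tauto

lemma isUnionOfCliques_clusterGraph (f : V → α) : IsUnionOfCliques (clusterGraph f) := by
  intro u v huv hne
  refine clusterGraph_adj.2 ⟨hne, ?_⟩
  rw [SimpleGraph.reachable_iff_reflTransGen] at huv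
  clear hne
  induction huv with
  | refl => rfl
  | tail _ hadj ih => exact ih.trans (clusterGraph_adj.1 hadj).2

/-- `x`, `y`, `z` induce a path on three vertices, whichever of them is its midpoint. -/
def SpansInducedPath (G : SimpleGraph V) (x y z : V) : Prop :=
  (G.Adj x y ∧ G.Adj y z ∧ Gᶜ.Adj x z) ∨ (G.Adj y z ∧ G.Adj z x ∧ Gᶜ.Adj y x) ∨
    (G.Adj z x ∧ G.Adj x y ∧ Gᶜ.Adj z y)

namespace SpansInducedPath

variable {x y z : V}

lemma rotate (h : SpansInducedPath G x y z) : SpansInducedPath G y z x := by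
  unfold SpansInducedPath at *
  tauto

lemma swap (h : SpansInducedPath G x y z) : SpansInducedPath G y x z := by
  simp only [SpansInducedPath, G.adj_comm y x, G.adj_comm z y, G.adj_comm x z,
    Gᶜ.adj_comm y x, Gᶜ.adj_comm z y, Gᶜ.adj_comm x z] at *
  tauto

end SpansInducedPath

/-- `B` has an edge inside every induced three-vertex path of `G`; such a `B` is a witness that `G`
is close to a disjoint union of cliques. -/
def MeetsInducedPaths (B G : SimpleGraph V) : Prop :=
  ∀ ⦃x y z : V⦄, G.Adj x y → G.Adj y z → Gᶜ.Adj x z → B.Adj x y ∨ B.Adj y z ∨ B.Adj x z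

lemma MeetsInducedPaths.adj_of_spansInducedPath (hB : MeetsInducedPaths B G) {x y z : V}
    (h : SpansInducedPath G x y z) : B.Adj y z ∨ B.Adj x z ∨ B.Adj y x := by
  rcases h with ⟨hxy, hyz, hxz⟩ | ⟨hyz, hzx, hyx⟩ | ⟨hzx, hxy, hzy⟩
  · have := hB hxy hyz hxz
    rw [B.adj_comm x y] at this
    tauto
  · have := hB hyz hzx hyx
    rw [B.adj_comm z x] at this
    tauto
  · have := hB hzx hxy hzy
    rw [B.adj_comm z x, B.adj_comm x y, B.adj_comm z y] at this
    tauto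

open scoped Classical in
lemma sum_card_spansInducedPath_le (hB : MeetsInducedPaths B G) (U : Finset V) :
    ∑ p ∈ U, #{q ∈ U ×ˢ U | SpansInducedPath G p q.1 q.2} ≤
      ∑ p ∈ U, 3 * #{q ∈ U ×ˢ U | SpansInducedPath G p q.1 q.2 ∧ B.Adj q.1 q.2} := by
  let g : V → V → V → ℕ := fun p x y => if SpansInducedPath G p x y ∧ B.Adj x y then 1 else 0
  have sum_swap₁ : ∑ p ∈ U, ∑ x ∈ U, ∑ y ∈ U, g x p y = ∑ p ∈ U, ∑ x ∈ U, ∑ y ∈ U, g p x y :=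
    sum_comm
  have sum_swap₂ : ∑ p ∈ U, ∑ x ∈ U, ∑ y ∈ U, g y x p = ∑ p ∈ U, ∑ x ∈ U, ∑ y ∈ U, g p x y := by
    rw [sum_congr rfl fun p _ => sum_comm, sum_comm]
    exact sum_congr rfl fun p _ => sum_comm
  have le_charge (p x y : V) :
      (if SpansInducedPath G p x y then 1 else 0) ≤ g p x y + g x p y + g y x p := by
    split_ifs with h
    · rcases hB.adj_of_spansInducedPath h with hb | hb | hb
      · have : g p x y = 1 := if_pos ⟨h, hb⟩
        lia
      · have : g x p y = 1 := if_pos ⟨h.swap, hb⟩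
        lia
      · have : g y x p = 1 := if_pos ⟨h.rotate.swap, hb⟩
        lia
    · exact Nat.zero_le _
  calc ∑ p ∈ U, #{q ∈ U ×ˢ U | SpansInducedPath G p q.1 q.2}
      = ∑ p ∈ U, ∑ x ∈ U, ∑ y ∈ U, if SpansInducedPath G p x y then 1 else 0 := by
        simp only [card_filter, sum_product]
    _ ≤ ∑ p ∈ U, ∑ x ∈ U, ∑ y ∈ U, (g p x y + g x p y + g y x p) := by
        gcongr
        exact le_charge _ _ _
    _ = 3 * ∑ p ∈ U, ∑ x ∈ U, ∑ y ∈ U, g p x y := by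
        simp only [sum_add_distrib, sum_swap₁, sum_swap₂]
        ring
    _ = ∑ p ∈ U, 3 * #{q ∈ U ×ˢ U | SpansInducedPath G p q.1 q.2 ∧ B.Adj q.1 q.2} := by
        simp only [mul_sum, card_filter, sum_product, g]

open scoped Classical in
/-- The labelling that puts `p` and its neighbours in `G` into a class of their own and keeps the
classes of `f` elsewhere: one pivot step of correlation clustering. The shift by one frees the
label `0`. -/
noncomputable def pivotLabelling (G : SimpleGraph V) (p : V) (f : V → ℕ) (x : V) : ℕ :=
  if Gᶜ.Adj p x then f x + 1 else 0

lemma spansInducedPath_or_adj_of_adj_symmDiff {f : V → ℕ} {p x y : V}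
    (h : (G ∆ clusterGraph (pivotLabelling G p f)).Adj x y) :
    SpansInducedPath G p x y ∨ Gᶜ.Adj p x ∧ Gᶜ.Adj p y ∧ (G ∆ clusterGraph f).Adj x y := by
  rw [adj_symmDiff_clusterGraph] at h ⊢
  simp only [pivotLabelling, SpansInducedPath, SimpleGraph.compl_adj] at h ⊢
  grind [SimpleGraph.compl_adj, G.adj_comm x p, G.adj_comm y p, G.adj_comm y x]

open scoped Classical in
lemma card_symmDiff_pivotLabelling_le (G : SimpleGraph V) (U : Finset V) (p : V) (f : V → ℕ) :
    #((G ∆ clusterGraph (pivotLabelling G p f)).interedges U U) ≤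
      #{q ∈ U ×ˢ U | SpansInducedPath G p q.1 q.2} +
        #((G ∆ clusterGraph f).interedges {x ∈ U | Gᶜ.Adj p x} {x ∈ U | Gᶜ.Adj p x}) := by
  refine (card_le_card fun ⟨x, y⟩ h => ?_).trans (card_union_le _ _)
  rw [SimpleGraph.mk_mem_interedges_iff] at h
  simp only [mem_union, mem_filter, mem_product, SimpleGraph.mk_mem_interedges_iff]
  have := spansInducedPath_or_adj_of_adj_symmDiff h.2.2
  tauto

open scoped Classical in
lemma card_spansInducedPath_add_card_interedges_le (G B : SimpleGraph V) (U : Finset V) (p : V) :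
    #{q ∈ U ×ˢ U | SpansInducedPath G p q.1 q.2 ∧ B.Adj q.1 q.2} +
      #(B.interedges {x ∈ U | Gᶜ.Adj p x} {x ∈ U | Gᶜ.Adj p x}) ≤ #(B.interedges U U) := by
  rw [← card_union_of_disjoint]
  · refine card_le_card fun ⟨x, y⟩ h => ?_
    simp only [mem_union, mem_filter, mem_product, SimpleGraph.mk_mem_interedges_iff] at h ⊢
    tauto
  · rw [disjoint_left]
    rintro ⟨x, y⟩ h
    simp only [mem_filter, mem_product, SimpleGraph.mk_mem_interedges_iff, SpansInducedPath,
      SimpleGraph.compl_adj, G.adj_comm y p] at h ⊢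
    tauto

open scoped Classical in
theorem MeetsInducedPaths.exists_labelling (hB : MeetsInducedPaths B G) (U : Finset V) :
    ∃ f : V → ℕ, #((G ∆ clusterGraph f).interedges U U) ≤ 3 * #(B.interedges U U) := by
  induction U using Finset.strongInduction with
  | H U ih =>
    rcases U.eq_empty_or_nonempty with rfl | hU
    · exact ⟨fun _ => 0, by simp [SimpleGraph.interedges, Rel.interedges]⟩
    obtain ⟨p, hp, hpivot⟩ := exists_le_of_sum_le hU (sum_card_spansInducedPath_le hB U)
    have hrest : {x ∈ U | Gᶜ.Adj p x} ⊂ U := filter_ssubset.2 ⟨p, hp, by simp⟩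
    obtain ⟨f, hf⟩ := ih _ hrest
    have hcost := card_symmDiff_pivotLabelling_le G U p f
    have hgain := card_spansInducedPath_add_card_interedges_le G B U p
    exact ⟨pivotLabelling G p f, by lia⟩

open scoped Classical in
lemma two_mul_ncard_edgeSet [Fintype V] (G : SimpleGraph V) :
    2 * G.edgeSet.ncard = #(G.interedges univ univ) := by
  rw [← SimpleGraph.coe_edgeFinset, Set.ncard_coe_finset, SimpleGraph.two_mul_card_edgeFinset]
  rfl

theorem MeetsInducedPaths.exists_isUnionOfCliques [Finite V] (hB : MeetsInducedPaths B G) :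
    ∃ H : SimpleGraph V, IsUnionOfCliques H ∧
      (G.edgeSet ∆ H.edgeSet).ncard ≤ 3 * B.edgeSet.ncard := by
  classical
  have := Fintype.ofFinite V
  obtain ⟨f, hf⟩ := hB.exists_labelling univ
  refine ⟨clusterGraph f, isUnionOfCliques_clusterGraph f, ?_⟩
  have hedge : G.edgeSet ∆ (clusterGraph f).edgeSet = (G ∆ clusterGraph f).edgeSet := by
    simp [symmDiff]
  rw [← two_mul_ncard_edgeSet, ← two_mul_ncard_edgeSet] at hf
  rw [hedge]
  lia

end Clustering

section DotProduct

variable {κ V : Type*} [Fintype κ] {x y : κ → ℝ} {a R η : ℝ}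

lemma two_mul_dotProduct_add_dotProduct_le (x y z : κ → ℝ) :
    2 * (x ⬝ᵥ y + y ⬝ᵥ z) ≤ x ⬝ᵥ x + y ⬝ᵥ y + z ⬝ᵥ z + 2 * (x ⬝ᵥ z) := by
  have h : 0 ≤ (x - y + z) ⬝ᵥ (x - y + z) :=
    sum_nonneg fun l _ => mul_self_nonneg _
  simp only [dotProduct_add, add_dotProduct, dotProduct_sub, sub_dotProduct] at h
  linarith [dotProduct_comm x y, dotProduct_comm y z, dotProduct_comm x z]

lemma sub_le_dotProduct_of_abs_sub_le (hx : a ≤ x ⬝ᵥ x) (hy : a ≤ y ⬝ᵥ y)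
    (h : ∀ l, |x l - y l| ≤ η) : a - Fintype.card κ * η ^ 2 / 2 ≤ x ⬝ᵥ y := by
  have hdist : (x - y) ⬝ᵥ (x - y) ≤ Fintype.card κ * η ^ 2 := by
    calc (x - y) ⬝ᵥ (x - y) = ∑ l, |x l - y l| ^ 2 := by
          simp only [dotProduct, Pi.sub_apply, sq_abs]
          simp only [sq]
      _ ≤ ∑ _l : κ, η ^ 2 := by
          gcongr with l
          exact h l
      _ = Fintype.card κ * η ^ 2 := by simp
  simp only [dotProduct_sub, sub_dotProduct] at hdist
  linarith [dotProduct_comm x y]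

lemma abs_le_of_dotProduct_self_le (h : x ⬝ᵥ x ≤ R) (l : κ) : |x l| ≤ √R := by
  refine Real.abs_le_sqrt (le_trans ?_ h)
  rw [sq]
  exact single_le_sum (f := fun l => x l * x l) (fun l _ => mul_self_nonneg _) (mem_univ l)

lemma exists_subset_card_le_mul_card_abs_sub_le (w : V → κ → ℝ) (hη : 0 < η) (S : Finset V)
    (hw : ∀ i ∈ S, ∀ l, |w i l| ≤ R) :
    ∃ T ⊆ S, #S ≤ (2 * ⌈R / η⌉₊ + 1) ^ Fintype.card κ * #T ∧
      ∀ i ∈ T, ∀ j ∈ T, ∀ l, |w i l - w j l| ≤ η := by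
  classical
  let K := ⌈R / η⌉₊
  let cell (i : V) (l : κ) : ℤ := ⌊w i l / η⌋
  let cells : Finset (κ → ℤ) := Fintype.piFinset fun _ => Icc (-K : ℤ) K
  have card_cells : #cells = (2 * K + 1) ^ Fintype.card κ := by
    simp only [cells, Fintype.card_piFinset, prod_const, card_univ, Int.card_Icc]
    congr 1
    lia
  have cell_mem : ∀ i ∈ S, cell i ∈ cells := by
    intro i hi
    refine Fintype.mem_piFinset.2 fun l => mem_Icc.2 ?_
    have hle : |w i l / η| ≤ K := by
      rw [abs_div, abs_of_pos hη]
      exact (div_le_div_of_nonneg_right (hw i hi l) hη.le).trans (Nat.le_ceil _)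
    constructor
    · rw [Int.le_floor]
      exact_mod_cast neg_le_of_abs_le hle
    · exact_mod_cast (Int.floor_le _).trans (le_of_abs_le hle)
  obtain ⟨q, -, hq⟩ := exists_max_image cells (fun q => #{i ∈ S | cell i = q})
    (by rw [← card_pos, card_cells]; positivity)
  refine ⟨{i ∈ S | cell i = q}, filter_subset _ _, ?_, fun i hi j hj l => ?_⟩
  · rw [← card_cells, mul_comm]
    exact card_le_mul_card_image_of_maps_to cell_mem _ hq
  · have hfloor : ⌊w i l / η⌋ = ⌊w j l / η⌋ :=
      congrFun ((mem_filter.1 hi).2.trans (mem_filter.1 hj).2.symm) l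
    have hlt := Int.abs_sub_lt_one_of_floor_eq_floor hfloor
    rw [← sub_div, abs_div, abs_of_pos hη, div_lt_one hη] at hlt
    exact hlt.le

end DotProduct

universe u v

lemma exists_nat_forall_card_le_mul_card_le_dotProduct (D : ℕ) (R : ℝ) {a b : ℝ} (hab : b < a) :
    ∃ N : ℕ, 0 < N ∧ ∀ {κ : Type u} {V : Type v} [Fintype κ], Fintype.card κ ≤ D →
      ∀ (w : V → κ → ℝ) (S : Finset V), (∀ i ∈ S, w i ⬝ᵥ w i ∈ Set.Icc a R) →
        ∃ T ⊆ S, #S ≤ N * #T ∧ ∀ i ∈ T, ∀ j ∈ T, b ≤ w i ⬝ᵥ w j := by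
  have : 0 < a - b := sub_pos.2 hab
  let η := √((a - b) / (D + 1))
  have hη : 0 < η := by positivity
  have hDη : D * η ^ 2 ≤ a - b := by
    rw [Real.sq_sqrt (by positivity), ← mul_div_assoc, div_le_iff₀ (by positivity)]
    nlinarith
  refine ⟨(2 * ⌈√R / η⌉₊ + 1) ^ D, by positivity, fun {κ V} _ hκ w S hS => ?_⟩
  obtain ⟨T, hTS, hST, hT⟩ := exists_subset_card_le_mul_card_abs_sub_le w hη S
    fun i hi => abs_le_of_dotProduct_self_le (hS i hi).2
  refine ⟨T, hTS, hST.trans (by gcongr; lia), fun i hi j hj => ?_⟩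
  have hclose := sub_le_dotProduct_of_abs_sub_le (hS i (hTS hi)).1 (hS j (hTS hj)).1 (hT i hi j hj)
  have hκη : Fintype.card κ * η ^ 2 ≤ D * η ^ 2 := by gcongr
  linarith

section Spectral

variable {ι V : Type*}

/-- The matrix `∑ l ∈ s, μ l • v l (v l)ᵀ`: the part of a matrix with orthonormal eigenvectors `v`
and eigenvalues `μ` that belongs to the eigenvalues indexed by `s`. -/
def spectralPart (μ : ι → ℝ) (v : ι → V → ℝ) (s : Finset ι) : Matrix V V ℝ :=
  Matrix.of fun i j => ∑ l ∈ s, μ l * v l i * v l j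

/-- The vectors whose Gram matrix is `spectralPart μ v s` when `μ` is nonnegative on `s`. -/
noncomputable def spectralVector (μ : ι → ℝ) (v : ι → V → ℝ) (s : Finset ι) (i : V) : s → ℝ :=
  fun l => √(μ l) * v l i

variable {μ : ι → ℝ} {v : ι → V → ℝ} {s : Finset ι}

lemma spectralPart_apply (i j : V) :
    spectralPart μ v s i j = ∑ l ∈ s, μ l * v l i * v l j := rfl

lemma spectralPart_comm (i j : V) : spectralPart μ v s i j = spectralPart μ v s j i := by
  simp only [spectralPart_apply, mul_right_comm]

lemma spectralVector_dotProduct (hμ : ∀ l ∈ s, 0 ≤ μ l) (i j : V) :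
    spectralVector μ v s i ⬝ᵥ spectralVector μ v s j = spectralPart μ v s i j := by
  rw [spectralPart_apply, ← sum_coe_sort s, dotProduct]
  refine sum_congr rfl fun l _ => ?_
  rw [spectralVector, spectralVector, mul_mul_mul_comm, Real.mul_self_sqrt (hμ l l.2), mul_assoc]

lemma sum_sum_spectralPart (T : Finset V) :
    ∑ i ∈ T, ∑ j ∈ T, spectralPart μ v s i j = ∑ l ∈ s, μ l * (∑ i ∈ T, v l i) ^ 2 := by
  simp only [spectralPart_apply]
  rw [sum_congr rfl fun i _ => sum_comm, sum_comm]
  refine sum_congr rfl fun l _ => ?_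
  rw [sq, sum_mul_sum, mul_sum]
  refine sum_congr rfl fun i _ => ?_
  simp only [mul_sum, mul_assoc]

lemma sum_sq_spectralPart_row [Fintype V] [DecidableEq ι]
    (hv : ∀ l m, v l ⬝ᵥ v m = if l = m then 1 else 0) (i : V) :
    ∑ j, spectralPart μ v s i j ^ 2 = ∑ l ∈ s, (μ l * v l i) ^ 2 := by
  calc ∑ j, spectralPart μ v s i j ^ 2
      = ∑ j, ∑ l ∈ s, ∑ m ∈ s, (μ l * v l i) * (μ m * v m i) * (v l j * v m j) := by
        refine sum_congr rfl fun j _ => ?_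
        rw [spectralPart_apply, sq, sum_mul_sum]
        exact sum_congr rfl fun l _ => sum_congr rfl fun m _ => by ring
    _ = ∑ l ∈ s, ∑ m ∈ s, (μ l * v l i) * (μ m * v m i) * (v l ⬝ᵥ v m) := by
        rw [sum_comm]
        refine sum_congr rfl fun l _ => ?_
        rw [sum_comm]
        simp only [dotProduct, mul_sum]
    _ = ∑ l ∈ s, (μ l * v l i) ^ 2 := by
        simp +contextual [hv, sq]

lemma sum_sum_sq_spectralPart [Fintype V] [DecidableEq ι]
    (hv : ∀ l m, v l ⬝ᵥ v m = if l = m then 1 else 0) :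
    ∑ i, ∑ j, spectralPart μ v s i j ^ 2 = ∑ l ∈ s, μ l ^ 2 := by
  have hnorm (l : ι) : ∑ i, v l i ^ 2 = 1 := by simpa [dotProduct, sq] using hv l l
  simp only [sum_sq_spectralPart_row hv, mul_pow]
  rw [sum_comm]
  simp only [← mul_sum, hnorm, mul_one]

end Spectral

/-- `v` is an orthonormal basis of `ℝ^V` in which `A` is diagonal, with eigenvalues `μ`. -/
structure IsOrthonormalEigenbasis {V : Type*} [Fintype V] [DecidableEq V] (A : Matrix V V ℝ)
    (μ : V → ℝ) (v : V → V → ℝ) : Prop where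
  mulVec_eq : ∀ l, A.mulVec (v l) = μ l • v l
  dotProduct_eq : ∀ l m, v l ⬝ᵥ v m = if l = m then 1 else 0

namespace IsOrthonormalEigenbasis

variable {V : Type*} [Fintype V] [DecidableEq V] {A : Matrix V V ℝ} {μ : V → ℝ} {v : V → V → ℝ}

lemma sum_mul_eq (h : IsOrthonormalEigenbasis A μ v) (i j : V) :
    ∑ l, v l i * v l j = if i = j then 1 else 0 := by
  have hrows : Matrix.of v * (Matrix.of v).transpose = 1 := by
    ext l m
    exact (h.dotProduct_eq l m).trans (Matrix.one_apply ..).symm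
  have hcols : (Matrix.of v).transpose * Matrix.of v = 1 := mul_eq_one_comm.1 hrows
  exact (congrFun (congrFun hcols i) j).trans (Matrix.one_apply ..)

lemma spectralPart_univ (h : IsOrthonormalEigenbasis A μ v) : spectralPart μ v univ = A := by
  ext i j
  have heigen (l : V) : μ l * v l i = ∑ k, A i k * v l k := (congrFun (h.mulVec_eq l) i).symm
  simp only [spectralPart_apply, heigen, sum_mul, mul_assoc]
  rw [sum_comm]
  simp [← mul_sum, h.sum_mul_eq]

lemma sum_sq_sum (h : IsOrthonormalEigenbasis A μ v) (T : Finset V) :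
    ∑ l, (∑ i ∈ T, v l i) ^ 2 = #T := by
  have hpart := sum_sum_spectralPart (μ := fun _ => 1) (v := v) (s := univ) T
  simpa [spectralPart_apply, h.sum_mul_eq] using hpart.symm

lemma sum_mul_sq_le (h : IsOrthonormalEigenbasis A μ v) (hA : ∀ i j, |A i j| ≤ 1) (i : V) :
    ∑ l, (μ l * v l i) ^ 2 ≤ Fintype.card V := by
  rw [← sum_sq_spectralPart_row h.dotProduct_eq, h.spectralPart_univ]
  calc ∑ j, A i j ^ 2 ≤ ∑ _j : V, 1 := sum_le_sum fun j _ => (sq_le_one_iff_abs_le_one _).2 (hA i j)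
    _ = (Fintype.card V : ℝ) := by simp

lemma sum_sq_le (h : IsOrthonormalEigenbasis A μ v) (hA : ∀ i j, |A i j| ≤ 1) :
    ∑ l, μ l ^ 2 ≤ (Fintype.card V : ℝ) ^ 2 := by
  rw [← sum_sum_sq_spectralPart h.dotProduct_eq]
  simp only [sum_sq_spectralPart_row h.dotProduct_eq]
  calc ∑ i, ∑ l, (μ l * v l i) ^ 2 ≤ ∑ _i : V, (Fintype.card V : ℝ) :=
        sum_le_sum fun i _ => h.sum_mul_sq_le hA i
    _ = (Fintype.card V : ℝ) ^ 2 := by simp [sq]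

lemma mul_card_le_of_le_spectralPart (h : IsOrthonormalEigenbasis A μ v) (hA : ∀ i j, A i j ≤ 1)
    {m b : ℝ} (hm : 0 ≤ m) (hμ : ∀ l, -m ≤ μ l) {s T : Finset V}
    (hT : ∀ i ∈ T, ∀ j ∈ T, b ≤ spectralPart μ v s i j) : (b - 1) * #T ≤ m := by
  have hpart : b * (#T : ℝ) ^ 2 ≤ ∑ l ∈ s, μ l * (∑ i ∈ T, v l i) ^ 2 := by
    calc b * (#T : ℝ) ^ 2 = ∑ _i ∈ T, ∑ _j ∈ T, b := by
          simp only [sum_const, nsmul_eq_mul]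
          ring
      _ ≤ _ := by
          rw [← sum_sum_spectralPart]
          exact sum_le_sum fun i hi => sum_le_sum fun j hj => hT i hi j hj
  have htotal : ∑ l, μ l * (∑ i ∈ T, v l i) ^ 2 ≤ (#T : ℝ) ^ 2 := by
    calc ∑ l, μ l * (∑ i ∈ T, v l i) ^ 2 = ∑ i ∈ T, ∑ j ∈ T, A i j := by
          rw [← sum_sum_spectralPart, h.spectralPart_univ]
      _ ≤ ∑ _i ∈ T, ∑ _j ∈ T, 1 := sum_le_sum fun i _ => sum_le_sum fun j _ => hA i j
      _ = (#T : ℝ) ^ 2 := by simp [sq]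
  have hrest : -(m * #T) ≤ ∑ l ∈ sᶜ, μ l * (∑ i ∈ T, v l i) ^ 2 := by
    calc -(m * #T) = ∑ l, -m * (∑ i ∈ T, v l i) ^ 2 := by
          rw [← mul_sum, h.sum_sq_sum, neg_mul]
      _ ≤ ∑ l ∈ sᶜ, -m * (∑ i ∈ T, v l i) ^ 2 := by
          rw [← sum_add_sum_compl s]
          simp only [add_le_iff_nonpos_left]
          exact sum_nonpos fun l _ => mul_nonpos_of_nonpos_of_nonneg (neg_nonpos.2 hm) (sq_nonneg _)
      _ ≤ _ := sum_le_sum fun l _ => mul_le_mul_of_nonneg_right (hμ l) (sq_nonneg _)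
  have hsplit := sum_add_sum_compl s fun l => μ l * (∑ i ∈ T, v l i) ^ 2
  rcases (Nat.cast_nonneg (α := ℝ) #T).eq_or_lt with h0 | hpos
  · simpa [← h0] using hm
  · refine le_of_mul_le_mul_right ?_ hpos
    linarith [sq (#T : ℝ), sub_mul b 1 (#T : ℝ)]

lemma card_mul_sq_le (h : IsOrthonormalEigenbasis A μ v) (hA : ∀ i j, |A i j| ≤ 1) {t : ℝ}
    (ht : 0 ≤ t) {s : Finset V} (hs : ∀ l ∈ s, t ≤ μ l) :
    #s * t ^ 2 ≤ (Fintype.card V : ℝ) ^ 2 := by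
  calc #s * t ^ 2 = ∑ _l ∈ s, t ^ 2 := by simp
    _ ≤ ∑ l ∈ s, μ l ^ 2 := by
        gcongr with l hl
        exact hs l hl
    _ ≤ ∑ l, μ l ^ 2 := sum_le_univ_sum_of_nonneg fun _ => sq_nonneg _
    _ ≤ _ := h.sum_sq_le hA

lemma mul_spectralPart_self_le (h : IsOrthonormalEigenbasis A μ v) (hA : ∀ i j, |A i j| ≤ 1)
    {t : ℝ} (ht : 0 ≤ t) {s : Finset V} (hs : ∀ l ∈ s, t ≤ μ l) (i : V) :
    t * spectralPart μ v s i i ≤ Fintype.card V := by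
  calc t * spectralPart μ v s i i = ∑ l ∈ s, t * (μ l * v l i ^ 2) := by
        simp only [spectralPart_apply, mul_sum, sq, mul_assoc]
    _ ≤ ∑ l ∈ s, μ l * (μ l * v l i ^ 2) := by
        gcongr with l hl
        · exact mul_nonneg (ht.trans (hs l hl)) (sq_nonneg _)
        · exact hs l hl
    _ = ∑ l ∈ s, (μ l * v l i) ^ 2 := sum_congr rfl fun l _ => by ring
    _ ≤ ∑ l, (μ l * v l i) ^ 2 := sum_le_univ_sum_of_nonneg fun _ => sq_nonneg _
    _ ≤ _ := h.sum_mul_sq_le hA i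

lemma card_le_one_div_sq [Nonempty V] (h : IsOrthonormalEigenbasis A μ v)
    (hA : ∀ i j, |A i j| ≤ 1) {γ : ℝ} (hγ : 0 < γ) {s : Finset V}
    (hs : ∀ l ∈ s, γ * Fintype.card V ≤ μ l) : (#s : ℝ) ≤ 1 / γ ^ 2 := by
  have hn : (0 : ℝ) < Fintype.card V := Nat.cast_pos.2 Fintype.card_pos
  have hle := h.card_mul_sq_le hA (by positivity) hs
  rw [mul_pow, ← mul_assoc] at hle
  rw [le_div_iff₀ (by positivity)]
  exact le_of_mul_le_mul_right (by rwa [one_mul]) (pow_pos hn 2)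

lemma spectralPart_self_le_one_div [Nonempty V] (h : IsOrthonormalEigenbasis A μ v)
    (hA : ∀ i j, |A i j| ≤ 1) {γ : ℝ} (hγ : 0 < γ) {s : Finset V}
    (hs : ∀ l ∈ s, γ * Fintype.card V ≤ μ l) (i : V) : spectralPart μ v s i i ≤ 1 / γ := by
  have hn : (0 : ℝ) < Fintype.card V := Nat.cast_pos.2 Fintype.card_pos
  have hle := h.mul_spectralPart_self_le hA (by positivity) hs i
  rw [le_div_iff₀ hγ]
  refine le_of_mul_le_mul_right ?_ hn
  linarith

end IsOrthonormalEigenbasis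

theorem exists_pos_card_lt_spectralPart_self_le {γ a ξ : ℝ} (hγ : 0 < γ) (ha : 1 < a)
    (hξ : 0 < ξ) :
    ∃ c : ℝ, 0 < c ∧ ∀ {V : Type u} [Fintype V] [DecidableEq V] {A : Matrix V V ℝ} {μ : V → ℝ}
      {v : V → V → ℝ}, IsOrthonormalEigenbasis A μ v → (∀ i j, |A i j| ≤ 1) →
      (∀ l, -(c * Fintype.card V) ≤ μ l) →
      ∀ s : Finset V, (∀ l ∈ s, γ * Fintype.card V ≤ μ l) →
        (#{i | a < spectralPart μ v s i i} : ℝ) ≤ ξ * Fintype.card V := by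
  let b := (1 + a) / 2
  have hb : 0 < b - 1 := by simp only [b]; linarith
  obtain ⟨N, hN, hcluster⟩ := exists_nat_forall_card_le_mul_card_le_dotProduct.{u, u}
    ⌈1 / γ ^ 2⌉₊ (1 / γ) (show b < a by simp only [b]; linarith)
  have hN' : (0 : ℝ) < N := Nat.cast_pos.2 hN
  refine ⟨ξ * (b - 1) / N, by positivity, fun {V} _ _ {A μ v} h hA hμ s hs => ?_⟩
  rcases isEmpty_or_nonempty V with hV | hV
  · simp
  have hs_nonneg (l) (hl : l ∈ s) : 0 ≤ μ l := le_trans (by positivity) (hs l hl)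
  have hcard : Fintype.card s ≤ ⌈1 / γ ^ 2⌉₊ := by
    rw [Fintype.card_coe]
    exact_mod_cast (h.card_le_one_div_sq hA hγ hs).trans (Nat.le_ceil _)
  have hgram := spectralVector_dotProduct (v := v) hs_nonneg
  obtain ⟨T, -, hST, hT⟩ := hcluster hcard (spectralVector μ v s) {i | a < spectralPart μ v s i i}
    fun i hi => by
      rw [hgram]
      exact ⟨(mem_filter.1 hi).2.le, h.spectralPart_self_le_one_div hA hγ hs i⟩
  have hTcard : (b - 1) * #T ≤ ξ * (b - 1) / N * Fintype.card V :=
    h.mul_card_le_of_le_spectralPart (fun i j => (abs_le.1 (hA i j)).2) (by positivity) hμ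
      fun i hi j hj => (hT i hi j hj).trans_eq (hgram i j)
  calc (#{i | a < spectralPart μ v s i i} : ℝ) ≤ N * #T := by exact_mod_cast hST
    _ = N / (b - 1) * ((b - 1) * #T) := by field_simp
    _ ≤ N / (b - 1) * (ξ * (b - 1) / N * Fintype.card V) := by gcongr
    _ = ξ * Fintype.card V := by field_simp

section BadPairs

variable {V : Type*}

/-- The graph of bad pairs for a splitting `A_G = F + E`: those that contain a vertex with a large
diagonal entry in `F`, or at which `E` is large. -/
def badPairGraph (F E : Matrix V V ℝ) : SimpleGraph V :=
  SimpleGraph.fromRel fun x y => 11 / 10 < F x x ∨ 1 / 10 < |E x y|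

lemma adjMat_of_adj {G : SimpleGraph V} {x y : V} (h : G.Adj x y) : adjMat G x y = 1 := if_pos h

lemma adjMat_of_not_adj {G : SimpleGraph V} {x y : V} (h : ¬G.Adj x y) : adjMat G x y = 0 :=
  if_neg h

lemma abs_adjMat_le_one (G : SimpleGraph V) (x y : V) : |adjMat G x y| ≤ 1 := by
  by_cases h : G.Adj x y
  · simp [adjMat_of_adj h]
  · simp [adjMat_of_not_adj h]

lemma meetsInducedPaths_badPairGraph {κ : Type*} [Fintype κ] {G : SimpleGraph V}
    {F E : Matrix V V ℝ} (hFE : F + E = adjMat G) {w : V → κ → ℝ}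
    (hF : ∀ i j, w i ⬝ᵥ w j = F i j) : MeetsInducedPaths (badPairGraph F E) G := by
  intro x y z hxy hyz hxz
  by_contra! hgood
  simp only [badPairGraph, SimpleGraph.fromRel_adj, hxy.ne, hyz.ne, hxz.ne, ne_eq,
    not_false_eq_true, true_and, not_or, not_lt] at hgood
  obtain ⟨⟨⟨hFx, hExy⟩, hFy, -⟩, ⟨⟨-, hEyz⟩, hFz, -⟩, ⟨-, hExz⟩, -⟩ := hgood
  have sum_xy : F x y + E x y = 1 := by rw [← adjMat_of_adj hxy, ← hFE]; rfl
  have sum_yz : F y z + E y z = 1 := by rw [← adjMat_of_adj hyz, ← hFE]; rfl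
  have sum_xz : F x z + E x z = 0 := by
    rw [← adjMat_of_not_adj ((SimpleGraph.compl_adj ..).1 hxz).2, ← hFE]; rfl
  -- `2 * (9 / 10 + 9 / 10) ≤ 3 * (11 / 10) + 2 * (1 / 10)` fails.
  have hpsd := two_mul_dotProduct_add_dotProduct_le (w x) (w y) (w z)
  simp only [hF] at hpsd
  linarith [le_of_abs_le hExy, le_of_abs_le hEyz, neg_le_of_abs_le hExz]

lemma card_lt_abs_mul_sq_le [Fintype V] (E : Matrix V V ℝ) {t : ℝ} (ht : 0 ≤ t) :
    #{q : V × V | t < |E q.1 q.2|} * t ^ 2 ≤ ∑ i, ∑ j, E i j ^ 2 := by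
  calc #{q : V × V | t < |E q.1 q.2|} * t ^ 2
      = ∑ q : V × V with t < |E q.1 q.2|, t ^ 2 := by simp
    _ ≤ ∑ q : V × V with t < |E q.1 q.2|, E q.1 q.2 ^ 2 := by
        refine sum_le_sum fun q hq => ?_
        rw [← sq_abs (E q.1 q.2)]
        gcongr
        exact (mem_filter.1 hq).2.le
    _ ≤ ∑ q : V × V, E q.1 q.2 ^ 2 := sum_le_univ_sum_of_nonneg fun _ => sq_nonneg _
    _ = ∑ i, ∑ j, E i j ^ 2 := Fintype.sum_prod_type _

lemma ncard_edgeSet_badPairGraph_le [Fintype V] {F E : Matrix V V ℝ}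
    (hE : ∀ i j, E i j = E j i) :
    ((badPairGraph F E).edgeSet.ncard : ℝ) ≤
      50 * ∑ i, ∑ j, E i j ^ 2 + #{i | 11 / 10 < F i i} * Fintype.card V := by
  classical
  let heavy : Finset V := {i | 11 / 10 < F i i}
  have hcover : (badPairGraph F E).interedges univ univ ⊆
      ({q : V × V | 1 / 10 < |E q.1 q.2|} : Finset _) ∪ (heavy ×ˢ univ ∪ univ ×ˢ heavy) := by
    rintro ⟨x, y⟩ h
    have hxy := ((SimpleGraph.mk_mem_interedges_iff ..).1 h).2.2
    simp only [badPairGraph, SimpleGraph.fromRel_adj, hE y x] at hxy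
    simp only [mem_union, mem_filter, mem_product, mem_univ, heavy]
    tauto
  have hcount : 2 * (badPairGraph F E).edgeSet.ncard ≤
      #{q : V × V | 1 / 10 < |E q.1 q.2|} + 2 * (#heavy * Fintype.card V) := by
    rw [two_mul_ncard_edgeSet]
    refine (card_le_card hcover).trans ((card_union_le _ _).trans ?_)
    gcongr
    refine (card_union_le _ _).trans_eq ?_
    rw [card_product, card_product, card_univ]
    ring
  have hlarge := card_lt_abs_mul_sq_le E (t := 1 / 10) (by norm_num)
  have hcount' : (2 : ℝ) * (badPairGraph F E).edgeSet.ncard ≤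
      #{q : V × V | 1 / 10 < |E q.1 q.2|} + 2 * (#heavy * Fintype.card V) := by
    exact_mod_cast hcount
  linarith

end BadPairs

theorem stmt6_general {ε γ : ℝ} (hε : 0 < ε) (hγ : 0 < γ) :
    ∃ c : ℝ, 0 < c ∧ ∀ {V : Type u} [Fintype V] [DecidableEq V] (G : SimpleGraph V) {μ : V → ℝ}
      {v : V → V → ℝ}, IsOrthonormalEigenbasis (adjMat G) μ v →
      ∑ l with μ l < γ * Fintype.card V, μ l ^ 2 ≤ ε / 300 * (Fintype.card V : ℝ) ^ 2 →
      (∃ H : SimpleGraph V, IsUnionOfCliques H ∧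
        ((G.edgeSet ∆ H.edgeSet).ncard : ℝ) ≤ ε * (Fintype.card V : ℝ) ^ 2) ∨
      ∃ l, μ l ≤ -(c * Fintype.card V) := by
  obtain ⟨c, hc, hcard_heavy⟩ := exists_pos_card_lt_spectralPart_self_le.{u} hγ
    (show 1 < (11 / 10 : ℝ) by norm_num) (show 0 < ε / 6 by positivity)
  refine ⟨c, hc, fun {V} _ _ G {μ v} h hsmall => ?_⟩
  rw [or_iff_not_imp_right]
  intro hμ
  push Not at hμ
  let s : Finset V := {l | ¬μ l < γ * Fintype.card V}
  let F := spectralPart μ v s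
  let E := spectralPart μ v {l | μ l < γ * Fintype.card V}
  have hs (l) (hl : l ∈ s) : γ * Fintype.card V ≤ μ l := not_lt.1 (mem_filter.1 hl).2
  have hFE : F + E = adjMat G := by
    ext i j
    rw [← h.spectralPart_univ, add_comm]
    exact sum_filter_add_sum_filter_not ..
  have hgram := spectralVector_dotProduct (v := v) (s := s)
    fun l hl => le_trans (by positivity) (hs l hl)
  obtain ⟨H, hH, hGH⟩ := (meetsInducedPaths_badPairGraph hFE hgram).exists_isUnionOfCliques
  refine ⟨H, hH, ?_⟩
  have hbad := ncard_edgeSet_badPairGraph_le (F := F) (E := E) spectralPart_comm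
  have hE : ∑ i, ∑ j, E i j ^ 2 = _ := sum_sum_sq_spectralPart h.dotProduct_eq
  have hF : (#{i | 11 / 10 < F i i} : ℝ) ≤ ε / 6 * Fintype.card V :=
    hcard_heavy h (abs_adjMat_le_one G) (fun l => (hμ l).le) s hs
  calc ((G.edgeSet ∆ H.edgeSet).ncard : ℝ) ≤ 3 * (badPairGraph F E).edgeSet.ncard := by
        exact_mod_cast hGH
    _ ≤ 3 * (50 * (ε / 300 * (Fintype.card V : ℝ) ^ 2) +
          ε / 6 * Fintype.card V * Fintype.card V) := by
        gcongr
        refine hbad.trans ?_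
        rw [hE]
        gcongr
    _ = ε * (Fintype.card V : ℝ) ^ 2 := by ring

-- Translating spectral information: if the small eigenvalues carry little square mass,
-- then `G` is `ε`-close to a disjoint union of cliques, or `λₙ ≤ -c_{ε,γ} n`.
theorem stmt6 (ε : ℝ) (hε : 0 < ε) :
    ∃ δ : ℝ, 0 < δ ∧
      ∀ γ : ℝ, 0 < γ →
        ∃ c : ℝ, 0 < c ∧
          ∃ n₀ : ℕ, ∀ (n : ℕ) (hn : n₀ ≤ n) (hn1 : 1 ≤ n)
            (G : SimpleGraph (Fin n)) (μ : Fin n → ℝ) (v : Fin n → Fin n → ℝ),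
            Antitone μ →
            (∀ i, (adjMat G).mulVec (v i) = μ i • v i) →
            (∀ i j : Fin n, (∑ k, v i k * v j k) = if i = j then (1 : ℝ) else 0) →
            (∑ i ∈ Finset.univ.filter (fun i => μ i < γ * (n : ℝ)), μ i ^ 2) ≤ δ * (n : ℝ) ^ 2 →
            (∃ H : SimpleGraph (Fin n), IsUnionOfCliques H ∧ EpsClose ε G H) ∨
              μ ⟨n - 1, by omega⟩ ≤ -(c * (n : ℝ)) := by
  refine ⟨ε / 300, by positivity, fun γ hγ => ?_⟩
  obtain ⟨c, hc, h⟩ := stmt6_general hε hγ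
  refine ⟨c, hc, 0, fun n _ _ G μ v hanti hv ho hsmall => ?_⟩
  rcases h G ⟨hv, ho⟩ (by simpa using hsmall) with ⟨H, hH, hGH⟩ | ⟨l, hl⟩
  · exact Or.inl ⟨H, hH, H, ⟨.refl⟩, by simpa using hGH⟩
  · exact Or.inr ((hanti (Nat.le_sub_one_of_lt l.2)).trans (by simpa using hl))
end

section
/- Set c = 1/99. There exists n₀ such that for all n ≥ n₀ the following holds: if G is a graph on n vertices with sp*(G) ≤ (1/2) n^(1+c), then for every threshold T ≥ n^(1−2c), the quantity S_T = ∑_{i : λ_i ≥ T} λ_i satisfies S_T² ≤ 250 n · S_{T²/(8n)}. -/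
-- `sp*(G)`: the SDP relaxation of the surplus.
noncomputable def spStar {V : Type*} [Fintype V] (G : SimpleGraph V) : ℝ :=
  sSup {x : ℝ | ∃ M : Matrix V V ℝ, M.PosSemidef ∧ (∀ i, M i i ≤ 1) ∧
    x = (1 / 2) * ∑ i, ∑ j, (-(adjMat G)) i j * M i j}

-- `S_T`, the sum of the eigenvalues that are at least `T`.
noncomputable def SSum {n : ℕ} (mu : Fin n → ℝ) (T : ℝ) : ℝ :=
  ∑ i ∈ Finset.univ.filter (fun i => T ≤ mu i), mu i

/-!
Let `A = B - N` be the decomposition of the adjacency matrix into its positive and negative parts,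
and let `P ≤ B` be the part of `A` on the eigenvalues that are at least `T`, so `tr P = S_T`. Since
`A` has entries `0` and `1`, it equals its own Schur square, and the Schur product theorem gives
`P ⊙ P - 2 (B ⊙ N) ≤ A`.

The matrix `P ⊙ P` has trace at least `S_T² / n` and rank at most `(S_T / T)²`, so for
`τ = T² / (8n)` its eigenvalues below `τ` carry at most an eighth of this trace. Testing the
inequality against the projection `Q` onto the other eigenspaces and applying Ky Fan's principle to
`A` bounds `(7/8) S_T² / n` by `S_τ` plus the error `2 tr (Q (B ⊙ N))`. The error is small: the
entries of `Q` are at most `(n / T)² / τ` because `τ Q ≤ P ⊙ P`, while `‖B‖_F ≤ n`, and testing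
`sp*` on `N / √n` yields `‖N‖_F² ≤ 2 √n sp*(G)`.
-/

open scoped Matrix MatrixOrder

section Rank

variable {m n K : Type*} [Fintype n] [Field K]

theorem exists_eq_mul_of_rank (A : Matrix m n K) :
    ∃ (C : Matrix m (Fin A.rank) K) (D : Matrix (Fin A.rank) n K), A = C * D := by
  classical
  let b := Module.finBasis K (LinearMap.range A.mulVecLin)
  let col (j : n) : LinearMap.range A.mulVecLin := A.mulVecLin.rangeRestrict (Pi.single j 1)
  refine ⟨Matrix.of fun i k => (b k : m → K) i, Matrix.of fun k j => b.repr (col j) k, ?_⟩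
  ext i j
  calc A i j = (col j : m → K) i := by simp [col]
    _ = ((∑ k, b.repr (col j) k • b k : LinearMap.range A.mulVecLin) : m → K) i := by
      rw [b.sum_repr]
    _ = ∑ k, (b k : m → K) i * b.repr (col j) k := by
      simp only [Submodule.coe_sum, Submodule.coe_smul, Finset.sum_apply, Pi.smul_apply,
        smul_eq_mul, mul_comm]

theorem rank_hadamard_le (A B : Matrix m n K) : (A ⊙ B).rank ≤ A.rank * B.rank := by
  obtain ⟨C, D, hA⟩ := exists_eq_mul_of_rank A
  obtain ⟨C', D', hB⟩ := exists_eq_mul_of_rank B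
  have h : A ⊙ B = (Matrix.of fun i (p : Fin A.rank × Fin B.rank) => C i p.1 * C' i p.2) *
      (Matrix.of fun (p : Fin A.rank × Fin B.rank) j => D p.1 j * D' p.2 j) := by
    ext i j
    rw [Matrix.hadamard_apply, congrFun₂ hA i j, congrFun₂ hB i j]
    simp only [Matrix.mul_apply, Matrix.of_apply, Finset.sum_mul_sum, Fintype.sum_prod_type,
      mul_mul_mul_comm]
  calc (A ⊙ B).rank ≤ _ := h ▸ Matrix.rank_mul_le_left _ _
    _ ≤ Fintype.card (Fin A.rank × Fin B.rank) := Matrix.rank_le_card_width _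
    _ = A.rank * B.rank := by simp

end Rank

section Loewner

open scoped ComplexOrder

variable {V 𝕜 : Type*} [RCLike 𝕜] {A B Q : Matrix V V 𝕜}

theorem apply_self_le_of_le (h : A ≤ B) (x : V) : A x x ≤ B x x := by
  simpa using (Matrix.le_iff.mp h).diag_nonneg (i := x)

variable [Fintype V]

theorem trace_mul_nonneg (hA : A.PosSemidef) (hB : B.PosSemidef) : 0 ≤ (A * B).trace := by
  classical
  obtain ⟨C, rfl⟩ := CStarAlgebra.nonneg_iff_eq_star_mul_self.mp hB.nonneg
  rw [← mul_assoc, Matrix.trace_mul_cycle]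
  exact (hA.mul_mul_conjTranspose_same C).trace_nonneg

theorem trace_mul_le_trace_mul_left (hQ : Q.PosSemidef) (h : A ≤ B) :
    (Q * A).trace ≤ (Q * B).trace := by
  simpa [mul_sub] using trace_mul_nonneg hQ (Matrix.le_iff.mp h)

end Loewner

section RealMatrix

variable {V : Type*}

theorem abs_apply_le_of_posSemidef {M : Matrix V V ℝ} (hM : M.PosSemidef) {q : ℝ}
    (hd : ∀ x, M x x ≤ q) (x y : V) : |M x y| ≤ q := by
  have hq : 0 ≤ q := hM.diag_nonneg.trans (hd x)
  have hsymm : M y x = M x y := hM.isHermitian.apply x y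
  have hdet : 0 ≤ (M.submatrix ![x, y] ![x, y]).det := (hM.submatrix ![x, y]).det_nonneg
  simp only [Matrix.det_fin_two, Matrix.submatrix_apply, Matrix.cons_val_zero,
    Matrix.cons_val_one, hsymm, sub_nonneg] at hdet
  refine abs_le_of_sq_le_sq (b := q) ?_ hq
  calc M x y ^ 2 ≤ M x x * M y y := (sq _).trans_le hdet
    _ ≤ q * q := mul_le_mul (hd x) (hd y) hM.diag_nonneg hq
    _ = q ^ 2 := (sq q).symm

theorem abs_apply_le_of_smul_le_hadamard_self {P Q : Matrix V V ℝ} (hP : P.PosSemidef)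
    (hQ : Q.PosSemidef) {τ d : ℝ} (hτ : 0 < τ) (hQP : τ • Q ≤ P ⊙ P) (hd : ∀ x, P x x ≤ d)
    (x y : V) : |Q x y| ≤ d ^ 2 / τ := by
  refine abs_apply_le_of_posSemidef hQ (fun x => ?_) x y
  rw [le_div_iff₀ hτ, mul_comm]
  calc τ * Q x x ≤ P x x * P x x := apply_self_le_of_le hQP x
    _ ≤ d ^ 2 := by
      rw [← sq]
      exact pow_le_pow_left₀ hP.diag_nonneg (hd x) 2

theorem hadamard_self_sub_le {A B N P : Matrix V V ℝ} (hA : A ⊙ A = A) (hAB : A = B - N)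
    (hP : P.PosSemidef) (hPB : P ≤ B) (hN : N.PosSemidef) :
    P ⊙ P - (2 : ℝ) • (B ⊙ N) ≤ A := by
  have hB : B.PosSemidef := by simpa using hPB.add hP
  have hsum : ((B - P) ⊙ (B + P) + N ⊙ N).PosSemidef :=
    ((Matrix.le_iff.mp hPB).hadamard (hB.add hP)).add (hN.hadamard hN)
  have hdiff : A - (P ⊙ P - (2 : ℝ) • (B ⊙ N)) = (B - P) ⊙ (B + P) + N ⊙ N := by
    rw [← hA, hAB]
    ext x y
    simp only [Matrix.sub_apply, Matrix.add_apply, Matrix.smul_apply, Matrix.hadamard_apply,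
      smul_eq_mul]
    ring
  exact Matrix.le_iff.mpr (hdiff ▸ hsum)

variable [Fintype V]

theorem trace_mul_hadamard_le {B N Q : Matrix V V ℝ} {q : ℝ} (hQ : ∀ x y, |Q x y| ≤ q) :
    (Q * (B ⊙ N)).trace ≤ q * (√(B * Bᵀ).trace * √(N * Nᵀ).trace) := by
  have hsq (M : Matrix V V ℝ) : (M * Mᵀ).trace = ∑ p : V × V, |M p.1 p.2| ^ 2 := by
    simp [← Matrix.sum_hadamard_eq, Fintype.sum_prod_type, sq]
  cases isEmpty_or_nonempty V with
  | inl h => simp [Matrix.trace]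
  | inr h =>
  have hq : 0 ≤ q := (abs_nonneg _).trans (hQ h.some h.some)
  calc (Q * (B ⊙ N)).trace = ∑ p : V × V, Q p.2 p.1 * (B p.1 p.2 * N p.1 p.2) := by
        rw [Matrix.trace_mul_comm]
        simp [Matrix.trace, Matrix.mul_apply, Fintype.sum_prod_type, mul_comm]
    _ ≤ ∑ p : V × V, q * (|B p.1 p.2| * |N p.1 p.2|) := by
        refine Finset.sum_le_sum fun p _ => (le_abs_self _).trans ?_
        rw [abs_mul, abs_mul]
        exact mul_le_mul_of_nonneg_right (hQ _ _) (by positivity)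
    _ ≤ q * (√(B * Bᵀ).trace * √(N * Nᵀ).trace) := by
        rw [← Finset.mul_sum, hsq, hsq]
        gcongr
        exact Real.sum_mul_le_sqrt_mul_sqrt _ _ _

theorem sq_trace_le_card_mul_trace_hadamard_self_s12 (P : Matrix V V ℝ) :
    P.trace ^ 2 ≤ Fintype.card V * (P ⊙ P).trace := by
  simpa [Matrix.trace, sq] using sq_sum_le_card_mul_sum_sq (s := Finset.univ) (f := P.diag)

theorem sq_apply_self_le_mul_transpose (N : Matrix V V ℝ) (x : V) :
    N x x ^ 2 ≤ (N * Nᵀ) x x := by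
  simpa [Matrix.mul_apply, sq] using Finset.single_le_sum
    (f := fun y => N x y * N x y) (fun y _ => mul_self_nonneg _) (Finset.mem_univ x)

theorem mul_transpose_apply_self_le_card {A : Matrix V V ℝ} (hA : A ⊙ A = A) (x : V) :
    (A * Aᵀ) x x ≤ Fintype.card V := by
  have hle (y : V) : A x y * A x y ≤ 1 := by
    have h : A x y * A x y = A x y := congrFun₂ hA x y
    nlinarith
  simpa [Matrix.mul_apply] using Finset.sum_le_sum fun y (_ : y ∈ Finset.univ) => hle y

end RealMatrix

section PosPart

variable {ι R : Type*} [Ring R] [LinearOrder R] [IsOrderedRing R] (w : ι → R)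

theorem posPart_mul_self_le : w⁺ * w⁺ ≤ w * w := fun i => by
  obtain h | h := le_total 0 (w i)
  · simp [posPart_of_nonneg h]
  · simpa [posPart_of_nonpos h] using mul_nonneg_of_nonpos_of_nonpos h h

theorem negPart_mul_self_le : w⁻ * w⁻ ≤ w * w := by
  simpa using posPart_mul_self_le (-w)

theorem mul_negPart : w * w⁻ = -(w⁻ * w⁻) := funext fun i => by
  obtain h | h := le_total 0 (w i)
  · simp [negPart_of_nonneg h]
  · simp [negPart_of_nonpos h]

end PosPart

section Spectral

variable {V : Type*} [Fintype V] [DecidableEq V]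

/-- The symmetric matrix whose eigenvectors are the columns of the orthogonal matrix `U`, as a
function of its eigenvalues. Being an algebra homomorphism, it is the functional calculus of every
matrix diagonalized by `U`. -/
noncomputable def spectralHom (U : Matrix.orthogonalGroup V ℝ) : (V → ℝ) →ₐ[ℝ] Matrix V V ℝ :=
  (Unitary.conjStarAlgAut ℝ (Matrix V V ℝ) U : Matrix V V ℝ →ₐ[ℝ] Matrix V V ℝ).comp
    (Matrix.diagonalAlgHom ℝ)

theorem spectralHom_apply (U : Matrix.orthogonalGroup V ℝ) (w : V → ℝ) :
    spectralHom U w = (U : Matrix V V ℝ) * Matrix.diagonal w * (U : Matrix V V ℝ)ᵀ := rfl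

theorem exists_eq_spectralHom_of_eigenvectors {A : Matrix V V ℝ} {μ : V → ℝ} {v : V → V → ℝ}
    (hv : ∀ i, A *ᵥ v i = μ i • v i) (horth : ∀ i j, v i ⬝ᵥ v j = if i = j then 1 else 0) :
    ∃ U, A = spectralHom U μ := by
  have hrows : Matrix.of v * (Matrix.of v)ᵀ = 1 := by
    ext i j
    rw [Matrix.one_apply, ← horth i j]
    rfl
  let U : Matrix.orthogonalGroup V ℝ :=
    ⟨(Matrix.of v)ᵀ, (Matrix.mem_orthogonalGroup_iff' V ℝ).mpr hrows⟩
  have hU : (U : Matrix V V ℝ) * (U : Matrix V V ℝ)ᵀ = 1 := Unitary.coe_mul_star_self U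
  have hAU : A * U = (U : Matrix V V ℝ) * Matrix.diagonal μ := by
    ext x i
    rw [Matrix.mul_diagonal, mul_comm]
    exact congrFun (hv i) x
  exact ⟨U, by rw [spectralHom_apply, ← hAU, mul_assoc, hU, mul_one]⟩

theorem exists_eq_spectralHom_of_posSemidef {E : Matrix V V ℝ} (hE : E.PosSemidef) :
    ∃ U, ∃ e : V → ℝ, E = spectralHom U e ∧ 0 ≤ e ∧ Fintype.card {i // e i ≠ 0} = E.rank :=
  ⟨hE.isHermitian.eigenvectorUnitary, _, hE.isHermitian.spectral_theorem,
    hE.eigenvalues_nonneg, hE.isHermitian.rank_eq_card_non_zero_eigs.symm⟩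

variable (U : Matrix.orthogonalGroup V ℝ)

theorem spectralHom_mul_transpose (w : V → ℝ) :
    spectralHom U w * (spectralHom U w)ᵀ = spectralHom U (w * w) := by
  have hsymm : (spectralHom U w)ᵀ = spectralHom U w := by simp [spectralHom_apply, mul_assoc]
  rw [hsymm, map_mul]

theorem trace_spectralHom (w : V → ℝ) : (spectralHom U w).trace = ∑ i, w i := by
  have hU : (U : Matrix V V ℝ)ᵀ * (U : Matrix V V ℝ) = 1 := Unitary.coe_star_mul_self U
  rw [spectralHom_apply, Matrix.trace_mul_cycle, hU, one_mul, Matrix.trace_diagonal]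

theorem spectralHom_mono : Monotone (spectralHom U) := by
  intro w w' h
  rw [Matrix.le_iff, ← map_sub]
  exact (Matrix.PosSemidef.diagonal (sub_nonneg.mpr h)).mul_mul_conjTranspose_same _

theorem posSemidef_spectralHom {w : V → ℝ} (hw : 0 ≤ w) : (spectralHom U w).PosSemidef :=
  (Matrix.PosSemidef.diagonal hw).mul_mul_conjTranspose_same _

theorem rank_spectralHom_le (w : V → ℝ) :
    (spectralHom U w).rank ≤ Fintype.card {i // w i ≠ 0} := by
  rw [← Matrix.rank_diagonal w]
  exact (Matrix.rank_mul_le_left _ _).trans (Matrix.rank_mul_le_right _ _)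

end Spectral

section Threshold

variable {V : Type*} {T : ℝ}

/-- The truncation of a function at height `T`: values below `T` are replaced by `0`. Applied to the
eigenvalues of a matrix, its sum is `S_T`. -/
noncomputable def thresholdPart (T : ℝ) (w : V → ℝ) : V → ℝ := {i | T ≤ w i}.indicator w

theorem thresholdPart_nonneg (hT : 0 ≤ T) (w : V → ℝ) : 0 ≤ thresholdPart T w :=
  Set.indicator_nonneg fun _ hi => hT.trans hi

theorem thresholdPart_le_posPart (T : ℝ) (w : V → ℝ) : thresholdPart T w ≤ w⁺ :=
  Set.indicator_le' (fun _ _ => le_posPart _) fun _ _ => posPart_nonneg _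

theorem sub_le_thresholdPart (hT : 0 ≤ T) (w : V → ℝ) (i : V) : w i - T ≤ thresholdPart T w i := by
  by_cases hi : T ≤ w i
  · simpa [thresholdPart, hi] using hT
  · simpa [thresholdPart, hi] using (not_le.mp hi).le

theorem smul_thresholdPart_le (hT : 0 ≤ T) (w : V → ℝ) : T • thresholdPart T w ≤ w * w := by
  intro i
  by_cases hi : T ≤ w i
  · simpa [thresholdPart, hi] using mul_le_mul_of_nonneg_right hi (hT.trans hi)
  · simpa [thresholdPart, hi] using mul_self_nonneg (w i)

variable [Fintype V]

theorem sum_thresholdPart (T : ℝ) (w : V → ℝ) :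
    ∑ i, thresholdPart T w i = ∑ i with T ≤ w i, w i := by
  classical
  simp [thresholdPart, Set.indicator_apply, Finset.sum_filter]

theorem card_thresholdPart_ne_zero_mul_le (T : ℝ) (w : V → ℝ) :
    Nat.card {i // thresholdPart T w i ≠ 0} * T ≤ ∑ i, thresholdPart T w i := by
  classical
  have hle (i : V) (hi : thresholdPart T w i ≠ 0) : T ≤ thresholdPart T w i := by
    have hmem : T ≤ w i := Set.mem_of_indicator_ne_zero (s := {i | T ≤ w i}) hi
    simp [thresholdPart, hmem]
  calc (Nat.card {i // thresholdPart T w i ≠ 0} * T : ℝ)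
      = ∑ i with thresholdPart T w i ≠ 0, T := by
        rw [Nat.card_eq_fintype_card, Fintype.card_subtype, Finset.sum_const, nsmul_eq_mul]
    _ ≤ ∑ i with thresholdPart T w i ≠ 0, thresholdPart T w i :=
        Finset.sum_le_sum fun i hi => hle i (Finset.mem_filter.mp hi).2
    _ = ∑ i, thresholdPart T w i := Finset.sum_filter_ne_zero _

theorem sum_thresholdPart_eq_zero_or_le (hT : 0 ≤ T) (w : V → ℝ) :
    ∑ i, thresholdPart T w i = 0 ∨ T ≤ ∑ i, thresholdPart T w i := by
  by_cases h : ∃ i, T ≤ w i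
  · obtain ⟨i, hi⟩ := h
    have hle := Finset.single_le_sum (fun j _ => thresholdPart_nonneg hT w j) (Finset.mem_univ i)
    exact .inr (hi.trans (by simpa [thresholdPart, hi] using hle))
  · push Not at h
    exact .inl (Finset.sum_eq_zero fun i _ => by simp [thresholdPart, h i])

variable [DecidableEq V] (U : Matrix.orthogonalGroup V ℝ)

theorem rank_spectralHom_thresholdPart_mul_le (hT : 0 ≤ T) (w : V → ℝ) :
    (spectralHom U (thresholdPart T w)).rank * T ≤ ∑ i, thresholdPart T w i := by
  refine le_trans ?_ (card_thresholdPart_ne_zero_mul_le T w)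
  rw [Nat.card_eq_fintype_card]
  gcongr
  exact rank_spectralHom_le U _

-- Ky Fan's variational principle, with a Lagrange multiplier for the trace of `Q`.
theorem trace_mul_spectralHom_sub_le {Q : Matrix V V ℝ} (hQ : Q.PosSemidef) (hQ1 : Q ≤ 1)
    (hT : 0 ≤ T) (w : V → ℝ) :
    (Q * spectralHom U w).trace - T * Q.trace ≤ ∑ i, thresholdPart T w i := by
  have hle : spectralHom U (w - algebraMap ℝ (V → ℝ) T) ≤ spectralHom U (thresholdPart T w) :=
    spectralHom_mono U (sub_le_thresholdPart hT w)
  calc (Q * spectralHom U w).trace - T * Q.trace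
      = (Q * spectralHom U (w - algebraMap ℝ (V → ℝ) T)).trace := by
        rw [map_sub, AlgHom.commutes, Algebra.algebraMap_eq_smul_one, mul_sub, mul_smul_comm,
          mul_one, Matrix.trace_sub, Matrix.trace_smul, smul_eq_mul]
    _ ≤ (Q * spectralHom U (thresholdPart T w)).trace := trace_mul_le_trace_mul_left hQ hle
    _ = (spectralHom U (thresholdPart T w) * Q).trace := Matrix.trace_mul_comm _ _
    _ ≤ (spectralHom U (thresholdPart T w) * 1).trace :=
        trace_mul_le_trace_mul_left (posSemidef_spectralHom U (thresholdPart_nonneg hT w)) hQ1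
    _ = ∑ i, thresholdPart T w i := by rw [mul_one, trace_spectralHom]

theorem exists_threshold_projection {E : Matrix V V ℝ} (hE : E.PosSemidef) (T : ℝ) :
    ∃ Q : Matrix V V ℝ, Q.PosSemidef ∧ Q ≤ 1 ∧ T • Q ≤ E ∧
      E.trace - T * E.rank ≤ (Q * E).trace - T * Q.trace := by
  obtain ⟨U, e, rfl, he, hrank⟩ := exists_eq_spectralHom_of_posSemidef hE
  let q : V → ℝ := {i | T ≤ e i}.indicator 1
  refine ⟨spectralHom U q, posSemidef_spectralHom U ?_, ?_, ?_, ?_⟩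
  · exact Set.indicator_nonneg fun _ _ => zero_le_one
  · rw [← map_one (spectralHom U)]
    exact spectralHom_mono U (Set.indicator_le_self' fun _ _ => zero_le_one)
  · rw [← map_smul]
    refine spectralHom_mono U fun i => ?_
    by_cases hi : T ≤ e i
    · simp [q, hi]
    · simpa [q, hi] using he i
  · have hpoint (i : V) : e i - T * (if e i ≠ 0 then 1 else 0) ≤ (q * e) i - T * q i := by
      simp only [q, Pi.mul_apply, Set.indicator_apply, Set.mem_ofPred_eq, Pi.one_apply]
      split_ifs <;> grind
    have hcard : ((spectralHom U e).rank : ℝ) = ∑ i, if e i ≠ 0 then (1 : ℝ) else 0 := by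
      rw [← hrank, Fintype.card_subtype, Finset.sum_boole]
    rw [← map_mul, trace_spectralHom, trace_spectralHom, trace_spectralHom, hcard, Finset.mul_sum,
      Finset.mul_sum, ← Finset.sum_sub_distrib, ← Finset.sum_sub_distrib]
    exact Finset.sum_le_sum fun i _ => hpoint i

end Threshold

section ZeroOneMatrix

variable {V : Type*} [Fintype V] [DecidableEq V] {U : Matrix.orthogonalGroup V ℝ} {μ w : V → ℝ}

theorem mul_transpose_spectralHom_apply_self_le_card
    (hA : spectralHom U μ ⊙ spectralHom U μ = spectralHom U μ) (hw : w * w ≤ μ * μ) (x : V) :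
    (spectralHom U w * (spectralHom U w)ᵀ) x x ≤ Fintype.card V := by
  refine le_trans ?_ (mul_transpose_apply_self_le_card hA x)
  rw [spectralHom_mul_transpose, spectralHom_mul_transpose]
  exact apply_self_le_of_le (spectralHom_mono U hw) x

theorem spectralHom_apply_self_le_card_div
    (hA : spectralHom U μ ⊙ spectralHom U μ = spectralHom U μ) {T : ℝ} (hT : 0 < T)
    (hw : T • w ≤ μ * μ) (x : V) : spectralHom U w x x ≤ Fintype.card V / T := by
  rw [le_div_iff₀ hT, mul_comm]
  calc T * spectralHom U w x x = spectralHom U (T • w) x x := by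
        rw [map_smul, Matrix.smul_apply, smul_eq_mul]
    _ ≤ spectralHom U (μ * μ) x x := apply_self_le_of_le (spectralHom_mono U hw) x
    _ = (spectralHom U μ * (spectralHom U μ)ᵀ) x x := by rw [spectralHom_mul_transpose]
    _ ≤ Fintype.card V := mul_transpose_apply_self_le_card hA x

theorem trace_mul_posPart_hadamard_negPart_le
    (hA : spectralHom U μ ⊙ spectralHom U μ = spectralHom U μ) {Q : Matrix V V ℝ} {q : ℝ}
    (hq : 0 ≤ q) (hQ : ∀ x y, |Q x y| ≤ q) :
    (Q * (spectralHom U μ⁺ ⊙ spectralHom U μ⁻)).trace ≤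
      q * (Fintype.card V * √(spectralHom U μ⁻ * (spectralHom U μ⁻)ᵀ).trace) := by
  have hB : √(spectralHom U μ⁺ * (spectralHom U μ⁺)ᵀ).trace ≤ Fintype.card V := by
    refine Real.sqrt_le_iff.mpr ⟨Nat.cast_nonneg _, ?_⟩
    simpa [Matrix.trace, sq] using Finset.sum_le_sum fun x (_ : x ∈ Finset.univ) =>
      mul_transpose_spectralHom_apply_self_le_card hA (posPart_mul_self_le μ) x
  refine (trace_mul_hadamard_le hQ).trans ?_
  gcongr

theorem thresholdPart_hadamard_self_sub_le
    (hA : spectralHom U μ ⊙ spectralHom U μ = spectralHom U μ) {T : ℝ} (hT : 0 ≤ T) :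
    spectralHom U (thresholdPart T μ) ⊙ spectralHom U (thresholdPart T μ) -
      (2 : ℝ) • (spectralHom U μ⁺ ⊙ spectralHom U μ⁻) ≤ spectralHom U μ := by
  refine hadamard_self_sub_le hA ?_ (posSemidef_spectralHom U (thresholdPart_nonneg hT μ))
    (spectralHom_mono U (thresholdPart_le_posPart T μ))
    (posSemidef_spectralHom U (negPart_nonneg μ))
  rw [← map_sub, posPart_sub_negPart]

theorem sq_sum_div_card_le_trace_hadamard_self (U : Matrix.orthogonalGroup V ℝ) (w : V → ℝ) :
    (∑ i, w i) ^ 2 / Fintype.card V ≤ (spectralHom U w ⊙ spectralHom U w).trace := by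
  rw [← trace_spectralHom U]
  refine div_le_of_le_mul₀ (Nat.cast_nonneg _) ?_ ?_
  · exact Finset.sum_nonneg fun _ _ => mul_self_nonneg _
  · rw [mul_comm]
    exact sq_trace_le_card_mul_trace_hadamard_self_s12 _

theorem rank_thresholdPart_hadamard_self_le (U : Matrix.orthogonalGroup V ℝ) (μ : V → ℝ) {T : ℝ}
    (hT : 0 < T) :
    ((spectralHom U (thresholdPart T μ) ⊙ spectralHom U (thresholdPart T μ)).rank : ℝ) ≤
      ((∑ i, thresholdPart T μ i) / T) ^ 2 := by
  have hle : (spectralHom U (thresholdPart T μ)).rank ≤ (∑ i, thresholdPart T μ i) / T :=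
    (le_div_iff₀ hT).mpr (rank_spectralHom_thresholdPart_mul_le U hT.le μ)
  calc _ ≤ ((spectralHom U (thresholdPart T μ)).rank : ℝ) ^ 2 := by
        rw [sq]
        exact_mod_cast rank_hadamard_le _ _
    _ ≤ _ := by gcongr

theorem le_sum_thresholdPart_of_hadamard_self
    (hA : spectralHom U μ ⊙ spectralHom U μ = spectralHom U μ) {T τ : ℝ} (hT : 0 < T) (hτ : 0 < τ) :
    (∑ i, thresholdPart T μ i) ^ 2 / Fintype.card V -
        τ * ((∑ i, thresholdPart T μ i) / T) ^ 2 -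
        2 * ((Fintype.card V / T) ^ 2 / τ *
          (Fintype.card V * √(spectralHom U μ⁻ * (spectralHom U μ⁻)ᵀ).trace)) ≤
      ∑ i, thresholdPart τ μ i := by
  set P := spectralHom U (thresholdPart T μ)
  have hP : P.PosSemidef := posSemidef_spectralHom U (thresholdPart_nonneg hT.le μ)
  obtain ⟨Q, hQ, hQ1, hQP, hQtrace⟩ := exists_threshold_projection (hP.hadamard hP) τ
  have hQapply := abs_apply_le_of_smul_le_hadamard_self hP hQ hτ hQP
    (spectralHom_apply_self_le_card_div hA hT (smul_thresholdPart_le hT.le μ))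
  have hQA : (Q * (P ⊙ P)).trace - 2 * (Q * (spectralHom U μ⁺ ⊙ spectralHom U μ⁻)).trace ≤
      (Q * spectralHom U μ).trace := by
    simpa [mul_sub] using
      trace_mul_le_trace_mul_left hQ (thresholdPart_hadamard_self_sub_le hA hT.le)
  have herror := trace_mul_posPart_hadamard_negPart_le hA (by positivity) hQapply
  have htrace := sq_sum_div_card_le_trace_hadamard_self U (thresholdPart T μ)
  have hrank := mul_le_mul_of_nonneg_left (rank_thresholdPart_hadamard_self_le U μ hT) hτ.le
  have hKyFan := trace_mul_spectralHom_sub_le U hQ hQ1 hτ.le μ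
  linarith

end ZeroOneMatrix

section Graph

variable {V : Type*} (G : SimpleGraph V)

theorem adjMat_hadamard_self : adjMat G ⊙ adjMat G = adjMat G := by
  ext x y
  simp [adjMat]

variable [Fintype V]

theorem bddAbove_spStar :
    BddAbove {x : ℝ | ∃ M : Matrix V V ℝ, M.PosSemidef ∧ (∀ i, M i i ≤ 1) ∧
      x = (1 / 2) * ∑ i, ∑ j, (-(adjMat G)) i j * M i j} := by
  refine ⟨(1 / 2) * ∑ _ : V, ∑ _ : V, (1 : ℝ), ?_⟩
  rintro _ ⟨M, hM, hd, rfl⟩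
  gcongr with i _ j _
  calc (-adjMat G) i j * M i j ≤ |(-adjMat G) i j| * |M i j| := by
        rw [← abs_mul]
        exact le_abs_self _
    _ ≤ 1 * 1 := by
        gcongr
        · simp only [Matrix.neg_apply, abs_neg, adjMat, Matrix.of_apply]
          split_ifs <;> simp
        · exact abs_apply_le_of_posSemidef hM hd i j
    _ = 1 := one_mul 1

theorem neg_trace_adjMat_mul_le {M : Matrix V V ℝ} (hM : M.PosSemidef)
    (hd : ∀ x, M x x ≤ 1) : -(adjMat G * M).trace ≤ 2 * spStar G := by
  have hsymm : Mᵀ = M := hM.isHermitian.eq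
  calc -(adjMat G * M).trace = -(adjMat G * Mᵀ).trace := by rw [hsymm]
    _ = ∑ i, ∑ j, (-(adjMat G)) i j * M i j := by
        rw [← Matrix.trace_neg, ← neg_mul, ← Matrix.sum_hadamard_eq]
        rfl
    _ = 2 * ((1 / 2) * ∑ i, ∑ j, (-(adjMat G)) i j * M i j) := by ring
    _ ≤ 2 * spStar G := by
        gcongr
        exact le_csSup (bddAbove_spStar G) ⟨M, hM, hd, rfl⟩

theorem neg_trace_adjMat_mul_le_of_diag_le {M : Matrix V V ℝ} (hM : M.PosSemidef) {d : ℝ}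
    (hd0 : 0 < d) (hd : ∀ x, M x x ≤ d) : -(adjMat G * M).trace ≤ 2 * d * spStar G := by
  have h := neg_trace_adjMat_mul_le G (hM.smul (inv_nonneg.mpr hd0.le)) fun x => by
    simpa [inv_mul_le_iff₀ hd0] using hd x
  rw [mul_smul_comm, Matrix.trace_smul, smul_eq_mul, ← mul_neg, inv_mul_le_iff₀ hd0] at h
  linarith

variable [DecidableEq V] {G} {U : Matrix.orthogonalGroup V ℝ} {μ : V → ℝ}

theorem trace_mul_transpose_negPart_le (hA : adjMat G = spectralHom U μ) :
    (spectralHom U μ⁻ * (spectralHom U μ⁻)ᵀ).trace ≤ 2 * √(Fintype.card V) * spStar G := by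
  cases isEmpty_or_nonempty V with
  | inl h => simp [Matrix.trace]
  | inr h =>
  have hdiag (x : V) : spectralHom U μ⁻ x x ≤ √(Fintype.card V) :=
    Real.le_sqrt_of_sq_le <| (sq_apply_self_le_mul_transpose _ x).trans <|
      mul_transpose_spectralHom_apply_self_le_card (hA ▸ adjMat_hadamard_self G)
        (negPart_mul_self_le μ) x
  calc (spectralHom U μ⁻ * (spectralHom U μ⁻)ᵀ).trace = -(adjMat G * spectralHom U μ⁻).trace := by
        rw [spectralHom_mul_transpose, hA, ← map_mul, mul_negPart, map_neg, Matrix.trace_neg,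
          neg_neg]
    _ ≤ _ := neg_trace_adjMat_mul_le_of_diag_le G (posSemidef_spectralHom U (negPart_nonneg μ))
        (Real.sqrt_pos.mpr (Nat.cast_pos.mpr Fintype.card_pos)) hdiag

theorem le_sum_thresholdPart_of_adjMat [Nonempty V] (hA : adjMat G = spectralHom U μ) {T : ℝ}
    (hT : 0 < T) :
    7 / 8 * ((∑ i, thresholdPart T μ i) ^ 2 / Fintype.card V) -
        16 * (Fintype.card V : ℝ) ^ 4 / T ^ 4 * √(2 * √(Fintype.card V) * spStar G) ≤
      ∑ i, thresholdPart (T ^ 2 / (8 * Fintype.card V)) μ i := by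
  have hA2 := hA ▸ adjMat_hadamard_self G
  have hτ : 0 < T ^ 2 / (8 * Fintype.card V) := by positivity
  refine le_trans ?_ (le_sum_thresholdPart_of_hadamard_self hA2 hT hτ)
  generalize ∑ i, thresholdPart T μ i = S
  calc _ ≤ 7 / 8 * (S ^ 2 / Fintype.card V) - 16 * (Fintype.card V : ℝ) ^ 4 / T ^ 4 *
          √(spectralHom U μ⁻ * (spectralHom U μ⁻)ᵀ).trace := by
        gcongr
        exact trace_mul_transpose_negPart_le hA
    _ = _ := by
        field_simp
        ring

end Graph

section Asymptotics

open Filter Topology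

variable {c x T : ℝ}

theorem sqrt_two_mul_sqrt_mul_le_rpow {s : ℝ} (hx : 0 < x) (hs : s ≤ (1 / 2) * x ^ (1 + c)) :
    √(2 * √x * s) ≤ x ^ (3 / 4 + c / 2) := by
  rw [Real.sqrt_le_left (by positivity)]
  calc 2 * √x * s ≤ 2 * √x * ((1 / 2) * x ^ (1 + c)) := by gcongr
    _ = x ^ (1 / 2 : ℝ) * x ^ (1 + c) := by rw [Real.sqrt_eq_rpow]; ring
    _ = (x ^ (3 / 4 + c / 2)) ^ 2 := by
      rw [← Real.rpow_add hx, ← Real.rpow_mul_natCast hx.le]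
      ring_nf

theorem pow_four_div_mul_rpow_le (hx : 0 < x) (hT : x ^ (1 - 2 * c) ≤ T) :
    x ^ 4 / T ^ 4 * x ^ (3 / 4 + c / 2) ≤ x ^ (-(1 / 4 - 25 / 2 * c)) * (T ^ 2 / x) := by
  have hT0 : 0 < T := (Real.rpow_pos_of_pos hx _).trans_le hT
  have hexp : x ^ 5 * x ^ (3 / 4 + c / 2) =
      x ^ (-(1 / 4 - 25 / 2 * c)) * (x ^ (1 - 2 * c)) ^ 6 := by
    rw [← Real.rpow_natCast x 5, ← Real.rpow_mul_natCast hx.le, ← Real.rpow_add hx,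
      ← Real.rpow_add hx]
    congr 1
    push_cast
    ring
  calc x ^ 4 / T ^ 4 * x ^ (3 / 4 + c / 2)
      = x ^ (-(1 / 4 - 25 / 2 * c)) * (x ^ (1 - 2 * c)) ^ 6 / (T ^ 4 * x) := by
        rw [← hexp]
        field_simp
    _ ≤ x ^ (-(1 / 4 - 25 / 2 * c)) * T ^ 6 / (T ^ 4 * x) := by gcongr
    _ = x ^ (-(1 / 4 - 25 / 2 * c)) * (T ^ 2 / x) := by field_simp

theorem pow_four_div_mul_sqrt_le {s S δ : ℝ} (hx : 0 < x) (hs : s ≤ (1 / 2) * x ^ (1 + c))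
    (hT : x ^ (1 - 2 * c) ≤ T) (hS : T ≤ S) (hδ : 16 * x ^ (-(1 / 4 - 25 / 2 * c)) ≤ δ) :
    16 * x ^ 4 / T ^ 4 * √(2 * √x * s) ≤ δ * (S ^ 2 / x) := by
  have hT0 : 0 < T := (Real.rpow_pos_of_pos hx _).trans_le hT
  calc 16 * x ^ 4 / T ^ 4 * √(2 * √x * s)
      ≤ 16 * x ^ 4 / T ^ 4 * x ^ (3 / 4 + c / 2) := by
        gcongr
        exact sqrt_two_mul_sqrt_mul_le_rpow hx hs
    _ = 16 * (x ^ 4 / T ^ 4 * x ^ (3 / 4 + c / 2)) := by ring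
    _ ≤ 16 * (x ^ (-(1 / 4 - 25 / 2 * c)) * (T ^ 2 / x)) := by
        exact mul_le_mul_of_nonneg_left (pow_four_div_mul_rpow_le hx hT) (by norm_num)
    _ = 16 * x ^ (-(1 / 4 - 25 / 2 * c)) * (T ^ 2 / x) := by ring
    _ ≤ δ * (T ^ 2 / x) := by gcongr
    _ ≤ δ * (S ^ 2 / x) := by
        have hδ0 : 0 ≤ δ := le_trans (by positivity) hδ
        gcongr

theorem eventually_mul_rpow_neg_le (hc : c < 1 / 50) {δ : ℝ} (hδ : 0 < δ) :
    ∀ᶠ n : ℕ in atTop, 16 * (n : ℝ) ^ (-(1 / 4 - 25 / 2 * c)) ≤ δ := by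
  have hlim := ((tendsto_rpow_neg_atTop (by linarith : 0 < 1 / 4 - 25 / 2 * c)).comp
    tendsto_natCast_atTop_atTop).const_mul (16 : ℝ)
  rw [mul_zero] at hlim
  exact hlim.eventually_le_const hδ

end Asymptotics

theorem stmt12_general {c C : ℝ} (hc : c < 1 / 50) (hC : 8 / 7 < C) :
    ∃ n₀ : ℕ, ∀ (n : ℕ), n₀ ≤ n →
      ∀ (G : SimpleGraph (Fin n)) (μ : Fin n → ℝ) (v : Fin n → Fin n → ℝ),
        (∀ i, (adjMat G).mulVec (v i) = μ i • v i) →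
        (∀ i j : Fin n, (∑ k, v i k * v j k) = if i = j then (1 : ℝ) else 0) →
        spStar G ≤ (1 / 2) * (n : ℝ) ^ (1 + c) →
        ∀ T : ℝ, (n : ℝ) ^ (1 - 2 * c) ≤ T →
          (SSum μ T) ^ 2 ≤ C * (n : ℝ) * SSum μ (T ^ 2 / (8 * (n : ℝ))) := by
  have hδ : 0 < 7 / 8 - 1 / C := by
    rw [sub_pos, div_lt_iff₀ (by linarith)]
    linarith
  obtain ⟨n₀, hn₀⟩ := Filter.eventually_atTop.mp
    ((eventually_mul_rpow_neg_le hc hδ).and (Filter.eventually_gt_atTop 0))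
  refine ⟨n₀, fun n hn G μ v hv horth hsp T hT => ?_⟩
  obtain ⟨hsmall, hpos⟩ := hn₀ n hn
  have hn0 : (0 : ℝ) < n := Nat.cast_pos.mpr hpos
  have hT0 : 0 < T := (Real.rpow_pos_of_pos hn0 _).trans_le hT
  obtain ⟨U, hA⟩ := exists_eq_spectralHom_of_eigenvectors hv horth
  have : Nonempty (Fin n) := ⟨⟨0, hpos⟩⟩
  have hmain := le_sum_thresholdPart_of_adjMat hA hT0
  simp only [Fintype.card_fin] at hmain
  simp only [SSum, ← sum_thresholdPart]
  set S := ∑ i, thresholdPart T μ i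
  obtain hS | hS : S = 0 ∨ T ≤ S := sum_thresholdPart_eq_zero_or_le hT0.le μ
  · have hnonneg := Finset.sum_nonneg fun i (_ : i ∈ Finset.univ) =>
      thresholdPart_nonneg (T := T ^ 2 / (8 * n)) (by positivity) μ i
    rw [hS, zero_pow two_ne_zero]
    positivity
  · have herror := pow_four_div_mul_sqrt_le hn0 hsp hT hS hsmall
    calc S ^ 2 = C * n * (1 / C * (S ^ 2 / n)) := by field_simp
      _ ≤ C * n * ∑ i, thresholdPart (T ^ 2 / (8 * n)) μ i := by
        gcongr
        linarith

-- The recursion for graphs with small `sp*`: with `c = 1/99`, if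
-- `sp*(G) ≤ (1/2) n ^ (1 + c)` then `S_T ^ 2 ≤ 250 n S_{T^2/(8n)}` for `T ≥ n ^ (1 - 2c)`.
theorem stmt12 :
    ∃ n₀ : ℕ, ∀ (n : ℕ), n₀ ≤ n →
      ∀ (G : SimpleGraph (Fin n)) (μ : Fin n → ℝ) (v : Fin n → Fin n → ℝ),
        Antitone μ →
        (∀ i, (adjMat G).mulVec (v i) = μ i • v i) →
        (∀ i j : Fin n, (∑ k, v i k * v j k) = if i = j then (1 : ℝ) else 0) →
        spStar G ≤ (1 / 2) * (n : ℝ) ^ ((1 : ℝ) + 1 / 99) →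
        ∀ T : ℝ, (n : ℝ) ^ ((1 : ℝ) - 2 / 99) ≤ T →
          (SSum μ T) ^ 2 ≤ 250 * (n : ℝ) * SSum μ (T ^ 2 / (8 * (n : ℝ))) := by
  obtain ⟨n₀, h⟩ := stmt12_general (c := 1 / 99) (C := 250) (by norm_num) (by norm_num)
  exact ⟨n₀, fun n hn G μ v _ hv horth hsp T hT =>
    h n hn G μ v hv horth hsp T (by rwa [mul_one_div])⟩
end
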